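/- arXiv:1902.04945 — 3 statements merged into one kernel-verified Lean document; each statement's English description precedes it below -/
import Mathlib

section
/- Let d ≥ 1 be an integer and 0 < p_i ≤ u_i < ∞ for i = 1, 2, with p1 < p2 and p2/u2 > p1/u1. Let r > 0 satisfy 1/r > 1/p1 − 1/p2. Then there exists a constant c > 0 such that for all j ∈ ℕ₀ and all k ∈ ℕ: k^{1/r} · e_k(id_j) ≤ c · 2^{jd(1/r − 1/u1 + 1/u2)}. -/
open scoped ENNReal NNReal

noncomputable section

/-- `Q_{j,m} ⊆ Q = [0,1)^d` iff `0 ≤ m i < 2^j` for every coordinate `i`. -/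
def inUnitCube (d j : ℕ) (m : Fin d → ℤ) : Prop :=
  ∀ i, 0 ≤ m i ∧ m i < 2 ^ j

/-- For `ν ≤ j`: `Q_{j,m} ⊆ Q_{ν,k}`. -/
def cubeSub (d j ν : ℕ) (m k : Fin d → ℤ) : Prop :=
  ∀ i, k i * 2 ^ (j - ν) ≤ m i ∧ m i < (k i + 1) * 2 ^ (j - ν)

/-- The finite-dimensional Morrey quasi-norm `‖· | m^{2^{jd}}_{u,p}‖` (`ℝ≥0∞`-valued),
on coefficients indexed by the `m ∈ ℤ^d` with `Q_{j,m} ⊆ Q` (other coordinates are ignored). -/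
def mNorm (d : ℕ) (u p : ℝ) (j : ℕ) (lam : (Fin d → ℤ) → ℂ) : ℝ≥0∞ :=
  ⨆ νk : {νk : ℕ × (Fin d → ℤ) // νk.1 ≤ j ∧ inUnitCube d νk.1 νk.2},
    (2 : ℝ≥0∞) ^ ((d : ℝ) * ((j : ℝ) - (νk.1.1 : ℝ)) * (1 / u - 1 / p)) *
      (∑' m : {m : Fin d → ℤ // cubeSub d j νk.1.1 m νk.1.2},
        ((‖lam m.1‖₊ : ℝ≥0∞)) ^ p) ^ (1 / p)

/-- The `ℓ_q^{2^{jd}}` quasi-norm (`0 < q < ∞`) on level-`j` coefficients. -/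
def lqNorm (d : ℕ) (q : ℝ) (j : ℕ) (lam : (Fin d → ℤ) → ℂ) : ℝ≥0∞ :=
  (∑' m : {m : Fin d → ℤ // inUnitCube d j m}, ((‖lam m.1‖₊ : ℝ≥0∞)) ^ q) ^ (1 / q)

/-- The quasi-norm of the sequence space `ñ^σ_{u,p,q}(Q)`, `q ∈ (0,∞]`. -/
def nNorm (d : ℕ) (σ u p : ℝ) (q : ℝ≥0∞) (lam : ℕ → (Fin d → ℤ) → ℂ) : ℝ≥0∞ :=
  if q = ∞ then
    ⨆ j : ℕ, (2 : ℝ≥0∞) ^ ((j : ℝ) * (σ - d / u)) * mNorm d u p j (lam j)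
  else
    (∑' j : ℕ, ((2 : ℝ≥0∞) ^ ((j : ℝ) * (σ - d / u)) * mNorm d u p j (lam j)) ^ q.toReal) ^
      (1 / q.toReal)

/-- `k`-th entropy number of the identity map between two quasi-norms on one ambient group:
the infimum of all `ε > 0` such that the `N₁`-unit ball is covered by `2^(k-1)` `N₂`-balls of
radius `ε`. -/
def entropyNumber {Λ : Type*} [AddCommGroup Λ] (N₁ N₂ : Λ → ℝ≥0∞) (k : ℕ) : ℝ≥0∞ :=
  sInf {ε : ℝ≥0∞ | 0 < ε ∧ ∃ c : Fin (2 ^ (k - 1)) → Λ,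
    ∀ x : Λ, N₁ x ≤ 1 → ∃ i, N₂ (x - c i) ≤ ε}

/-- Operator quasi-norm of the identity map between two quasi-norms on one ambient space:
the smallest `C` with `N₂ x ≤ C · N₁ x` for all `x`. -/
def opNorm {Λ : Type*} (N₁ N₂ : Λ → ℝ≥0∞) : ℝ≥0∞ :=
  sInf {C : ℝ≥0∞ | ∀ x, N₂ x ≤ C * N₁ x}

end


/-- One-dimensional partition function bound. -/
lemma partition_bound (p q : ℝ) (hp : 0 < p) (hq : 0 < q) :
    ∃ C : ℝ, 0 < C ∧ ∀ θ : ℝ, 0 < θ → ∀ M : ℕ,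
      ∑ n ∈ Finset.Icc (-(M : ℤ)) M, Real.exp (-θ * |(n : ℝ)| ^ p) ≤ Real.exp (C * θ ^ (-q)) := by
  obtain ⟨h, hh⟩ := exists_nat_gt (2 / p / q)
  set a : ℝ := q * h with ha
  have h2p : 0 < 2 / p / q := by positivity
  have hhpos : 0 < (h : ℝ) := lt_trans h2p hh
  have hh0 : 1 ≤ h := by
    have : 0 < h := by exact_mod_cast hhpos
    omega
  have hapos : 0 < a := mul_pos hq hhpos
  have hap : 2 ≤ p * a := by
    have h3 := (div_lt_iff₀ hq).1 hh
    have h4 := (div_lt_iff₀ hp).1 h3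
    have : (h : ℝ) * q * p = p * a := by rw [ha]; ring
    linarith
  have hsum : Summable (fun n : ℤ => 1 / (n : ℝ) ^ 2) :=
    Real.summable_one_div_int_pow.2 (by norm_num)
  set Z : ℝ := ∑' n : ℤ, 1 / (n : ℝ) ^ 2 with hZ
  have hZ0 : 0 ≤ Z := tsum_nonneg (fun n => by positivity)
  set D : ℝ := a ^ a * Z with hD
  have hD0 : 0 ≤ D := by positivity
  set C : ℝ := 1 + D * (h.factorial : ℝ) with hC
  have hC1 : 1 ≤ C := by
    have : 0 ≤ D * (h.factorial : ℝ) := by positivity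
    linarith
  refine ⟨C, by linarith, fun θ hθ M => ?_⟩
  have hterm : ∀ n : ℤ, Real.exp (-θ * |(n : ℝ)| ^ p) ≤
      (if n = 0 then (1 : ℝ) else 0) + a ^ a * θ ^ (-a) * (1 / (n : ℝ) ^ 2) := by
    intro n
    by_cases hn : n = 0
    · subst hn
      simp [Real.zero_rpow hp.ne']
    · simp only [hn, if_false, zero_add]
      have hn1 : (1 : ℝ) ≤ |(n : ℝ)| := by
        have := Int.one_le_abs hn
        exact_mod_cast this
      have hn0 : 0 < |(n : ℝ)| := by linarith
      set y : ℝ := θ * |(n : ℝ)| ^ p with hy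
      have hy0 : 0 < y := by positivity
      have h1 : y / a ≤ Real.exp (y / a) := by
        have := Real.add_one_le_exp (y / a)
        linarith
      have h2 : (y / a) ^ a ≤ Real.exp y := by
        calc (y / a) ^ a ≤ (Real.exp (y / a)) ^ a :=
              Real.rpow_le_rpow (by positivity) h1 hapos.le
          _ = Real.exp y := by
              rw [← Real.exp_mul]; congr 1; field_simp
      have h3 : Real.exp (-y) ≤ ((y / a) ^ a)⁻¹ := by
        rw [Real.exp_neg]
        exact inv_anti₀ (by positivity) h2
      have h4 : ((y / a) ^ a)⁻¹ = a ^ a * θ ^ (-a) * (|(n : ℝ)| ^ (p * a))⁻¹ := by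
        rw [Real.div_rpow hy0.le hapos.le, hy, Real.mul_rpow hθ.le (by positivity),
          ← Real.rpow_mul hn0.le, Real.rpow_neg hθ.le]
        have : 0 < a ^ a := by positivity
        have : 0 < θ ^ a := by positivity
        field_simp
      have h5 : (|(n : ℝ)| ^ (p * a))⁻¹ ≤ 1 / (n : ℝ) ^ 2 := by
        rw [one_div]
        apply inv_anti₀ (by rw [← sq_abs]; positivity)
        rw [← sq_abs, ← Real.rpow_natCast]
        exact Real.rpow_le_rpow_of_exponent_le hn1 (by push_cast; exact hap)
      calc Real.exp (-θ * |(n : ℝ)| ^ p) = Real.exp (-y) := by rw [hy]; congr 1; ring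
        _ ≤ a ^ a * θ ^ (-a) * (|(n : ℝ)| ^ (p * a))⁻¹ := by rw [← h4]; exact h3
        _ ≤ _ := mul_le_mul_of_nonneg_left h5 (by positivity)
  have hθq : 0 < θ ^ (-q) := by positivity
  have hpow : θ ^ (-a) = (θ ^ (-q)) ^ h := by
    rw [← Real.rpow_natCast, ← Real.rpow_mul hθ.le]; congr 1; rw [ha]; ring
  set t := θ ^ (-q) with ht
  calc ∑ n ∈ Finset.Icc (-(M : ℤ)) M, Real.exp (-θ * |(n : ℝ)| ^ p)
      ≤ ∑ n ∈ Finset.Icc (-(M : ℤ)) M, ((if n = 0 then (1 : ℝ) else 0) +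
          a ^ a * θ ^ (-a) * (1 / (n : ℝ) ^ 2)) := Finset.sum_le_sum (fun n _ => hterm n)
    _ ≤ 1 + a ^ a * θ ^ (-a) * Z := by
        rw [Finset.sum_add_distrib, ← Finset.mul_sum]
        apply add_le_add
        · rw [Finset.sum_ite_eq']
          split_ifs <;> norm_num
        · apply mul_le_mul_of_nonneg_left _ (by positivity)
          exact hsum.sum_le_tsum _ (fun n _ => by positivity)
    _ = 1 + D * t ^ h := by rw [hpow, hD]; ring
    _ ≤ 1 + (C * t) ^ h / (h.factorial : ℝ) := by
        have hf : 0 < (h.factorial : ℝ) := by positivity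
        have h6 : D * (h.factorial : ℝ) ≤ C ^ h := by
          calc D * (h.factorial : ℝ) ≤ C := by rw [hC]; linarith
            _ = C ^ 1 := (pow_one C).symm
            _ ≤ C ^ h := pow_le_pow_right₀ hC1 hh0
        have : D * t ^ h ≤ (C * t) ^ h / (h.factorial : ℝ) := by
          rw [le_div_iff₀ hf, mul_pow]
          nlinarith [mul_le_mul_of_nonneg_right h6 (pow_nonneg hθq.le h)]
        linarith
    _ ≤ Real.exp (C * t) := by
        have hCt : 0 ≤ C * t := by positivity
        have h7 := Real.sum_le_exp_of_nonneg hCt (h + 1)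
        rw [Finset.sum_range_succ] at h7
        have h8 : (1 : ℝ) ≤ ∑ i ∈ Finset.range h, (C * t) ^ i / (i.factorial : ℝ) := by
          have := Finset.single_le_sum (s := Finset.range h)
            (f := fun i => (C * t) ^ i / (i.factorial : ℝ)) (fun i _ => by positivity)
            (Finset.mem_range.2 hh0 : 0 ∈ Finset.range h)
          simpa using this
        linarith

/-- Number of integer points in an `ℓ_p`-ball. -/
lemma count_bound {ι : Type*} [Fintype ι] (p : ℝ) (θ K B : ℝ) (hθ : 0 < θ)
    (hB : ∀ M : ℕ, ∑ n ∈ Finset.Icc (-(M : ℤ)) M, Real.exp (-θ * |(n : ℝ)| ^ p) ≤ Real.exp B)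
    (F : Finset (ι → ℤ)) (hF : ∀ f ∈ F, ∑ i, |(f i : ℝ)| ^ p ≤ K) :
    (F.card : ℝ) ≤ Real.exp (θ * K + B * Fintype.card ι) := by
  classical
  set M : ℕ := ∑ f ∈ F, ∑ i, (f i).natAbs with hM
  have hsub : F ⊆ Fintype.piFinset (fun _ : ι => Finset.Icc (-(M : ℤ)) M) := by
    intro f hf
    rw [Fintype.mem_piFinset]
    intro i
    have h1 : (f i).natAbs ≤ ∑ i, (f i).natAbs :=
      Finset.single_le_sum (f := fun i => (f i).natAbs) (fun _ _ => Nat.zero_le _)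
        (Finset.mem_univ i)
    have h2 : ∑ i, (f i).natAbs ≤ M :=
      Finset.single_le_sum (f := fun f : ι → ℤ => ∑ i, (f i).natAbs) (fun _ _ => Nat.zero_le _) hf
    rw [Finset.mem_Icc]
    omega
  calc (F.card : ℝ) = ∑ f ∈ F, (1 : ℝ) := by simp
    _ ≤ ∑ f ∈ F, Real.exp (θ * K) * ∏ i, Real.exp (-θ * |(f i : ℝ)| ^ p) := by
        apply Finset.sum_le_sum
        intro f hf
        rw [← Real.exp_sum, ← Real.exp_add, ← Finset.mul_sum]
        apply Real.one_le_exp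
        have := mul_le_mul_of_nonneg_left (hF f hf) hθ.le
        linarith
    _ ≤ ∑ f ∈ Fintype.piFinset (fun _ : ι => Finset.Icc (-(M : ℤ)) M),
          Real.exp (θ * K) * ∏ i, Real.exp (-θ * |(f i : ℝ)| ^ p) :=
        Finset.sum_le_sum_of_subset_of_nonneg hsub (fun _ _ _ => by positivity)
    _ = Real.exp (θ * K) *
          ∏ _i : ι, ∑ n ∈ Finset.Icc (-(M : ℤ)) M, Real.exp (-θ * |(n : ℝ)| ^ p) := by
        rw [← Finset.mul_sum, Finset.prod_univ_sum]
    _ ≤ Real.exp (θ * K) * ∏ _i : ι, Real.exp B := by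
        apply mul_le_mul_of_nonneg_left _ (Real.exp_pos _).le
        exact Finset.prod_le_prod (fun _ _ => Finset.sum_nonneg (fun _ _ => (Real.exp_pos _).le))
          (fun _ _ => hB M)
    _ = Real.exp (θ * K + B * Fintype.card ι) := by
        rw [Finset.prod_const, Finset.card_univ, ← Real.exp_nat_mul, Real.exp_add]
        ring_nf

/-- All integer points in an `ℓ_p`-ball, as a finset. -/
lemma count_finset {ι : Type*} [Fintype ι] (p : ℝ) (θ K B : ℝ) (hθ : 0 < θ)
    (hB : ∀ M : ℕ, ∑ n ∈ Finset.Icc (-(M : ℤ)) M, Real.exp (-θ * |(n : ℝ)| ^ p) ≤ Real.exp B) :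
    ∃ F : Finset (ι → ℤ), (∀ f, f ∈ F ↔ ∑ i, |(f i : ℝ)| ^ p ≤ K) ∧
      (F.card : ℝ) ≤ Real.exp (θ * K + B * Fintype.card ι) := by
  have hfin : {f : ι → ℤ | ∑ i, |(f i : ℝ)| ^ p ≤ K}.Finite := by
    by_contra hinf
    obtain ⟨n, hn⟩ := exists_nat_gt (Real.exp (θ * K + B * Fintype.card ι))
    obtain ⟨t, ht, htc⟩ := (show Set.Infinite _ from hinf).exists_subset_card_eq n
    have := count_bound p θ K B hθ hB t (fun f hf => ht hf)
    rw [htc] at this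
    linarith
  refine ⟨hfin.toFinset, fun f => by simp, ?_⟩
  exact count_bound p θ K B hθ hB _ (fun f hf => by simpa using hf)

lemma round_real (T x : ℝ) (hT : 0 < T) :
    ∃ z : ℤ, |(z : ℝ)| * T ≤ |x| ∧ |x - T * z| ≤ |x| ∧ |x - T * z| ≤ T := by
  have key : ∀ x : ℝ, 0 ≤ x →
      ∃ z : ℤ, |(z : ℝ)| * T ≤ |x| ∧ |x - T * z| ≤ |x| ∧ |x - T * z| ≤ T := by
    intro x hx
    have h0 : (0 : ℝ) ≤ (⌊x / T⌋ : ℝ) := by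
      exact_mod_cast Int.floor_nonneg.2 (div_nonneg hx hT.le)
    have h1 : (⌊x / T⌋ : ℝ) * T ≤ x := by
      rw [← le_div_iff₀ hT]; exact Int.floor_le _
    have h2 : x < ((⌊x / T⌋ : ℝ) + 1) * T := by
      rw [← div_lt_iff₀ hT]; exact Int.lt_floor_add_one _
    have h3 : 0 ≤ (⌊x / T⌋ : ℝ) * T := mul_nonneg h0 hT.le
    refine ⟨⌊x / T⌋, ?_, ?_, ?_⟩
    · rw [abs_of_nonneg h0, abs_of_nonneg hx]; exact h1
    · rw [abs_of_nonneg hx, abs_of_nonneg (by linarith)]; linarith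
    · rw [abs_of_nonneg (by linarith)]; linarith
  rcases le_total 0 x with hx | hx
  · exact key x hx
  · obtain ⟨z, h1, h2, h3⟩ := key (-x) (by linarith)
    refine ⟨-z, ?_, ?_, ?_⟩
    · push_cast; rw [abs_neg]; rwa [abs_neg] at h1
    · push_cast
      have : x - T * -(z : ℝ) = -(-x - T * z) := by ring
      rw [this, abs_neg]; rwa [abs_neg] at h2
    · push_cast
      have : x - T * -(z : ℝ) = -(-x - T * z) := by ring
      rw [this, abs_neg]; exact h3

lemma round_complex (T : ℝ) (x : ℂ) (hT : 0 < T) (p1 p2 : ℝ) (hp1 : 0 < p1) (h1 : p1 < p2) :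
    ∃ z w : ℤ, |(z : ℝ)| ^ p1 ≤ T ^ (-p1) * ‖x‖ ^ p1 ∧ |(w : ℝ)| ^ p1 ≤ T ^ (-p1) * ‖x‖ ^ p1 ∧
      ‖x - ((T * z : ℝ) + (T * w : ℝ) * Complex.I)‖ ^ p2 ≤
        (2 ^ p2 * T ^ (p2 - p1)) * ‖x‖ ^ p1 := by
  obtain ⟨z, hz1, hz2, hz3⟩ := round_real T x.re hT
  obtain ⟨w, hw1, hw2, hw3⟩ := round_real T x.im hT
  have hre := Complex.abs_re_le_norm x
  have him := Complex.abs_im_le_norm x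
  have aux : ∀ z : ℝ, |z| * T ≤ ‖x‖ → |z| ^ p1 ≤ T ^ (-p1) * ‖x‖ ^ p1 := by
    intro z hz
    have := Real.rpow_le_rpow (by positivity) hz hp1.le
    rw [Real.mul_rpow (abs_nonneg _) hT.le] at this
    rw [Real.rpow_neg hT.le, inv_mul_eq_div, le_div_iff₀ (by positivity)]
    exact this
  refine ⟨z, w, aux z (hz1.trans hre), aux w (hw1.trans him), ?_⟩
  set e := x - ((T * z : ℝ) + (T * w : ℝ) * Complex.I) with he
  have hn : ‖e‖ ≤ |x.re - T * z| + |x.im - T * w| := by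
    have := Complex.norm_le_abs_re_add_abs_im e
    simpa [he] using this
  have hm : ‖e‖ ≤ 2 * min ‖x‖ T := by
    have ha : |x.re - T * z| ≤ min ‖x‖ T := le_min (hz2.trans hre) hz3
    have hb : |x.im - T * w| ≤ min ‖x‖ T := le_min (hw2.trans him) hw3
    linarith
  have hmin : 0 ≤ min ‖x‖ T := le_min (norm_nonneg _) hT.le
  calc ‖e‖ ^ p2 ≤ (2 * min ‖x‖ T) ^ p2 := Real.rpow_le_rpow (norm_nonneg _) hm (by linarith)
    _ = 2 ^ p2 * ((min ‖x‖ T) ^ (p2 - p1) * (min ‖x‖ T) ^ p1) := by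
        rw [Real.mul_rpow (by norm_num) hmin,
          ← Real.rpow_add_of_nonneg hmin (by linarith) hp1.le]
        congr 2; ring
    _ ≤ 2 ^ p2 * (T ^ (p2 - p1) * ‖x‖ ^ p1) := by
        apply mul_le_mul_of_nonneg_left _ (by positivity)
        apply mul_le_mul _ _ (by positivity) (by positivity)
        · exact Real.rpow_le_rpow hmin (min_le_right _ _) (by linarith)
        · exact Real.rpow_le_rpow hmin (min_le_left _ _) hp1.le
    _ = _ := by ring

/-- The finite index set at level `j`. -/
noncomputable def idx (d j : ℕ) : Finset (Fin d → ℤ) := Fintype.piFinset (fun _ => Finset.Ico (0 : ℤ) (2 ^ j))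

lemma card_idx (d j : ℕ) : (Fintype.card (idx d j) : ℝ) = (2 : ℝ) ^ ((j : ℝ) * d) := by
  rw [Fintype.card_coe, idx, Fintype.card_piFinset]
  simp only [Int.card_Ico, sub_zero, Finset.prod_const, Finset.card_univ, Fintype.card_fin]
  have : ((2 : ℤ) ^ j).toNat = 2 ^ j := by
    have : ((2 : ℤ) ^ j) = ((2 ^ j : ℕ) : ℤ) := by push_cast; rfl
    rw [this, Int.toNat_natCast]
  rw [this]
  push_cast
  rw [← pow_mul, ← Real.rpow_natCast]
  push_cast
  rfl

lemma mem_idx_of_cubeSub {d j ν : ℕ} {m k : Fin d → ℤ} (hν : ν ≤ j) (hk : inUnitCube d ν k)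
    (h : cubeSub d j ν m k) : m ∈ idx d j := by
  rw [idx, Fintype.mem_piFinset]
  intro i
  obtain ⟨a, b⟩ := h i
  obtain ⟨e, f⟩ := hk i
  rw [Finset.mem_Ico]
  have hpos : (0 : ℤ) < 2 ^ (j - ν) := by positivity
  constructor
  · exact le_trans (mul_nonneg e hpos.le) a
  · have h1 : (k i + 1) * 2 ^ (j - ν) ≤ 2 ^ ν * 2 ^ (j - ν) :=
      mul_le_mul_of_nonneg_right (by omega) hpos.le
    rw [← pow_add, Nat.add_sub_cancel' hν] at h1
    exact lt_of_lt_of_le b h1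

lemma cubeSub_zero {d j : ℕ} (m : Fin d → ℤ) : cubeSub d j 0 m 0 ↔ m ∈ idx d j := by
  rw [idx, Fintype.mem_piFinset]
  simp [cubeSub, Finset.mem_Ico]

lemma local_sum_le {d j : ℕ} {u p : ℝ} (hp : 0 < p) {x : (Fin d → ℤ) → ℂ}
    (hx : mNorm d u p j x ≤ 1) {ν : ℕ} {k : Fin d → ℤ} (hν : ν ≤ j) (hk : inUnitCube d ν k) :
    (∑' m : {m : Fin d → ℤ // cubeSub d j ν m k}, ((‖x m.1‖₊ : ℝ≥0∞)) ^ p) ≤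
      (2 : ℝ≥0∞) ^ (-((d : ℝ) * ((j : ℝ) - ν) * (1 / u - 1 / p)) * p) := by
  have h := (le_iSup (fun νk : {νk : ℕ × (Fin d → ℤ) // νk.1 ≤ j ∧ inUnitCube d νk.1 νk.2} =>
    (2 : ℝ≥0∞) ^ ((d : ℝ) * ((j : ℝ) - (νk.1.1 : ℝ)) * (1 / u - 1 / p)) *
      (∑' m : {m : Fin d → ℤ // cubeSub d j νk.1.1 m νk.1.2},
        ((‖x m.1‖₊ : ℝ≥0∞)) ^ p) ^ (1 / p)) ⟨(ν, k), hν, hk⟩).trans hx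
  simp only at h
  set E := (d : ℝ) * ((j : ℝ) - ν) * (1 / u - 1 / p)
  set S := (∑' m : {m : Fin d → ℤ // cubeSub d j ν m k}, ((‖x m.1‖₊ : ℝ≥0∞)) ^ p)
  have h2 : S ^ (1 / p) ≤ (2 : ℝ≥0∞) ^ (-E) := by
    calc S ^ (1 / p) = (2 : ℝ≥0∞) ^ (-E) * ((2 : ℝ≥0∞) ^ E * S ^ (1 / p)) := by
          rw [← mul_assoc, ← ENNReal.rpow_add _ _ (by norm_num) (by norm_num)]
          simp
      _ ≤ (2 : ℝ≥0∞) ^ (-E) * 1 := by gcongr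
      _ = _ := mul_one _
  have h3 := ENNReal.rpow_le_rpow h2 hp.le
  rwa [← ENNReal.rpow_mul, ← ENNReal.rpow_mul, one_div, inv_mul_cancel₀ hp.ne',
    ENNReal.rpow_one] at h3

/-- The covering produced by quantizing at scale `T`. -/
lemma entropy_le (d : ℕ) (u1 p1 u2 p2 : ℝ)
    (hp1 : 0 < p1) (hp1u1 : p1 ≤ u1) (hp2 : 0 < p2) (hp2u2 : p2 ≤ u2)
    (h1 : p1 < p2) (h2 : p2 / u2 > p1 / u1) (j n : ℕ) (T K : ℝ) (hT : 0 < T)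
    (hK : T ^ (-p1) * (2 : ℝ) ^ ((j : ℝ) * d * (1 - p1 / u1)) = K)
    (F : Finset (idx d j → ℤ)) (hF : ∀ f, f ∈ F ↔ ∑ i, |(f i : ℝ)| ^ p1 ≤ K)
    (hcard : F.card * F.card ≤ 2 ^ (n - 1)) :
    entropyNumber (mNorm d u1 p1 j) (mNorm d u2 p2 j) n ≤
      ENNReal.ofReal (2 * T ^ (1 - p1 / p2)) *
        (2 : ℝ≥0∞) ^ ((j : ℝ) * d * (1 / u2 - p1 / (u1 * p2))) := by
  classical
  have hu1 : 0 < u1 := by linarith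
  have hu2 : 0 < u2 := by linarith
  have hK0 : 0 ≤ K := by rw [← hK]; positivity
  have h0F : (0 : idx d j → ℤ) ∈ F := by
    rw [hF]; simp [Real.zero_rpow hp1.ne', hK0]
  let cen : (idx d j → ℤ) × (idx d j → ℤ) → ((Fin d → ℤ) → ℂ) := fun fg m =>
    if h : m ∈ idx d j then
      ((T * fg.1 ⟨m, h⟩ : ℝ) : ℂ) + ((T * fg.2 ⟨m, h⟩ : ℝ) : ℂ) * Complex.I else 0
  have hemb : Nonempty ((F ×ˢ F : Finset _) ↪ Fin (2 ^ (n - 1))) := by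
    apply Function.Embedding.nonempty_of_card_le
    rw [Fintype.card_coe, Fintype.card_fin, Finset.card_product]
    exact hcard
  obtain ⟨emb⟩ := hemb
  have : Nonempty (F ×ˢ F : Finset _) := ⟨⟨(0, 0), Finset.mem_product.2 ⟨h0F, h0F⟩⟩⟩
  apply sInf_le
  refine ⟨?_, fun i => cen (Function.invFun emb i).1, ?_⟩
  · apply ENNReal.mul_pos
    · rw [Ne, ENNReal.ofReal_eq_zero, not_le]; positivity
    · exact (ENNReal.rpow_pos (by norm_num) (by norm_num)).ne'
  intro x hx
  choose z w hz hw hzw using fun m => round_complex T (x m) hT p1 p2 hp1 h1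
  have htot : ∑ m ∈ idx d j, ‖x m‖ ^ p1 ≤ (2 : ℝ) ^ ((j : ℝ) * d * (1 - p1 / u1)) := by
    have h := local_sum_le (u := u1) hp1 hx (Nat.zero_le j)
      (show inUnitCube d 0 (0 : Fin d → ℤ) from fun i => by simp)
    have hs : ENNReal.ofReal (∑ m ∈ idx d j, ‖x m‖ ^ p1) =
        ∑' m : {m : Fin d → ℤ // cubeSub d j 0 m 0}, ((‖x m.1‖₊ : ℝ≥0∞)) ^ p1 := by
      rw [ENNReal.ofReal_sum_of_nonneg (fun _ _ => by positivity)]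
      have : {m : Fin d → ℤ | cubeSub d j 0 m 0} = (idx d j : Set (Fin d → ℤ)) := by
        ext m; exact cubeSub_zero m
      change _ = ∑' m : {m : Fin d → ℤ | cubeSub d j 0 m 0}, ((‖x m.1‖₊ : ℝ≥0∞)) ^ p1
      rw [this]
      rw [Finset.tsum_subtype' (idx d j) (fun m => ((‖x m‖₊ : ℝ≥0∞)) ^ p1)]
      apply Finset.sum_congr rfl
      intro m _
      rw [← ENNReal.ofReal_rpow_of_nonneg (norm_nonneg _) hp1.le, ofReal_norm]
      rfl
    rw [← hs] at h
    have h2' : (2 : ℝ≥0∞) ^ (-((d : ℝ) * ((j : ℝ) - (0 : ℕ)) * (1 / u1 - 1 / p1)) * p1) =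
        ENNReal.ofReal ((2 : ℝ) ^ ((j : ℝ) * d * (1 - p1 / u1))) := by
      rw [← ENNReal.ofReal_rpow_of_pos (by norm_num)]
      congr 1
      · simp
      · field_simp
        push_cast
        ring
    rw [h2'] at h
    exact (ENNReal.ofReal_le_ofReal_iff (by positivity)).1 h
  have hmemaux : ∀ z : (Fin d → ℤ) → ℤ, (∀ m, |(z m : ℝ)| ^ p1 ≤ T ^ (-p1) * ‖x m‖ ^ p1) →
      (fun i : idx d j => z i.1) ∈ F := by
    intro z hz
    rw [hF]
    calc ∑ i : idx d j, |(z i.1 : ℝ)| ^ p1 ≤ ∑ i : idx d j, T ^ (-p1) * ‖x i.1‖ ^ p1 :=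
          Finset.sum_le_sum (fun i _ => hz i.1)
      _ = T ^ (-p1) * ∑ m ∈ idx d j, ‖x m‖ ^ p1 := by
          rw [← Finset.mul_sum, Finset.sum_coe_sort (idx d j) (fun m => ‖x m‖ ^ p1)]
      _ ≤ K := by
          rw [← hK]; exact mul_le_mul_of_nonneg_left htot (by positivity)
  let fg : (F ×ˢ F : Finset _) := ⟨(fun i : idx d j => z i.1, fun i : idx d j => w i.1),
    Finset.mem_product.2 ⟨hmemaux z hz, hmemaux w hw⟩⟩
  refine ⟨emb fg, ?_⟩
  beta_reduce
  rw [Function.leftInverse_invFun emb.injective fg]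
  have hpt : ∀ m ∈ idx d j, ((‖(x - cen fg.1) m‖₊ : ℝ≥0∞)) ^ p2 ≤
      ENNReal.ofReal (2 ^ p2 * T ^ (p2 - p1)) * ((‖x m‖₊ : ℝ≥0∞)) ^ p1 := by
    intro m hm
    have hc : cen fg.1 m = ((T * z m : ℝ) : ℂ) + ((T * w m : ℝ) : ℂ) * Complex.I := by
      simp only [cen, fg, hm, dif_pos]
    have := ENNReal.ofReal_le_ofReal (hzw m)
    rw [ENNReal.ofReal_mul (by positivity),
      ← ENNReal.ofReal_rpow_of_nonneg (norm_nonneg _) hp1.le,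
      ← ENNReal.ofReal_rpow_of_nonneg (norm_nonneg _) hp2.le, ofReal_norm,
      ofReal_norm] at this
    rw [Pi.sub_apply, hc]
    exact this
  apply iSup_le
  rintro ⟨⟨ν, k⟩, hν, hk⟩
  simp only
  have hν' : ν ≤ j := hν
  have hνr : (ν : ℝ) ≤ j := by exact_mod_cast hν'
  have hloc := local_sum_le (u := u1) hp1 hx hν' hk
  have hS : (∑' m : {m : Fin d → ℤ // cubeSub d j ν m k},
      ((‖(x - cen fg.1) m.1‖₊ : ℝ≥0∞)) ^ p2) ≤ ENNReal.ofReal (2 ^ p2 * T ^ (p2 - p1)) *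
        (2 : ℝ≥0∞) ^ (-((d : ℝ) * ((j : ℝ) - ν) * (1 / u1 - 1 / p1)) * p1) := by
    refine le_trans ?_ (mul_le_mul_right hloc _)
    rw [← ENNReal.tsum_mul_left]
    exact ENNReal.tsum_le_tsum (fun m => hpt m.1 (mem_idx_of_cubeSub hν' hk m.2))
  have hS2 := ENNReal.rpow_le_rpow hS (show 0 ≤ 1 / p2 by positivity)
  refine le_trans (mul_le_mul_right hS2 _) ?_
  rw [ENNReal.mul_rpow_of_nonneg _ _ (by positivity : 0 ≤ 1 / p2), ← ENNReal.rpow_mul,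
    ENNReal.ofReal_rpow_of_nonneg (by positivity) (by positivity : 0 ≤ 1 / p2)]
  have hD : (2 ^ p2 * T ^ (p2 - p1)) ^ (1 / p2) = 2 * T ^ (1 - p1 / p2) := by
    rw [Real.mul_rpow (by positivity) (by positivity), ← Real.rpow_mul (by norm_num),
      ← Real.rpow_mul hT.le]
    congr 1
    · rw [mul_one_div, div_self hp2.ne', Real.rpow_one]
    · congr 1; field_simp
  rw [hD, mul_left_comm, ← ENNReal.rpow_add _ _ (by norm_num) (by norm_num)]
  apply mul_le_mul_right
  apply ENNReal.rpow_le_rpow_of_exponent_le (by norm_num)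
  have hexp : (d : ℝ) * ((j : ℝ) - ν) * (1 / u2 - 1 / p2) +
      -((d : ℝ) * ((j : ℝ) - ν) * (1 / u1 - 1 / p1)) * p1 * (1 / p2) =
      ((j : ℝ) - ν) * d * (1 / u2 - p1 / (u1 * p2)) := by
    field_simp; ring
  rw [hexp]
  have hpos : 0 ≤ 1 / u2 - p1 / (u1 * p2) := by
    have : 1 / u2 - p1 / (u1 * p2) = (p2 / u2 - p1 / u1) / p2 := by field_simp
    rw [this]
    exact div_nonneg (by linarith) hp2.le
  apply mul_le_mul_of_nonneg_right _ hpos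
  apply mul_le_mul_of_nonneg_right _ (Nat.cast_nonneg d)
  have : (0 : ℝ) ≤ ν := Nat.cast_nonneg ν
  linarith

theorem stmt16 (d : ℕ) (hd : 1 ≤ d) (u1 p1 u2 p2 : ℝ)
    (hp1 : 0 < p1) (hp1u1 : p1 ≤ u1) (hp2 : 0 < p2) (hp2u2 : p2 ≤ u2) (r : ℝ) (hr : 0 < r)
    (h1 : p1 < p2) (h2 : p2 / u2 > p1 / u1)
    (hrp : 1 / r > 1 / p1 - 1 / p2) :
    ∃ c : ℝ, 0 < c ∧ ∀ j : ℕ, ∀ k : ℕ, 1 ≤ k →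
      ((k : ℝ≥0∞)) ^ (1 / r) * entropyNumber (mNorm d u1 p1 j) (mNorm d u2 p2 j) k ≤
        ENNReal.ofReal c * (2 : ℝ≥0∞) ^ (((j : ℝ) * d) * (1 / r - 1 / u1 + 1 / u2)) := by
  have hu1 : 0 < u1 := by linarith
  have hu2 : 0 < u2 := by linarith
  set δ : ℝ := 1 / p1 - 1 / p2 with hδ
  have hδ0 : 0 < δ := by
    have := one_div_lt_one_div_of_lt hp1 h1
    linarith
  set g : ℝ := (1 / r) / δ with hg
  have hg1 : 1 < g := by rw [hg, lt_div_iff₀ hδ0]; linarith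
  have hgδ : g * δ = 1 / r := div_mul_cancel₀ _ hδ0.ne'
  have hg10 : 0 < g - 1 := by linarith
  obtain ⟨C, hC, hCb⟩ := partition_bound p1 (1 / (g - 1)) hp1 (by positivity)
  set η : ℝ := Real.log 2 / 8 with hη
  have hη0 : 0 < η := by have := Real.log_pos (show (1 : ℝ) < 2 by norm_num); positivity
  set B : ℝ := (C / η) ^ (g - 1) / η with hB
  have hB0 : 0 < B := by positivity
  refine ⟨2 * B ^ δ, by positivity, fun j k hk => ?_⟩
  have hk0 : (0 : ℝ) < k := by exact_mod_cast hk
  set N : ℝ := (2 : ℝ) ^ ((j : ℝ) * d) with hN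
  have hN0 : 0 < N := by positivity
  set θ : ℝ := (C / η * (N / k)) ^ (g - 1) with hθ
  have hθ0 : 0 < θ := by positivity
  set K : ℝ := η * k / θ with hK
  have hK0 : 0 < K := by positivity
  set a : ℝ := p1 / u1 with ha
  set T : ℝ := (N ^ (1 - a) / K) ^ (1 / p1) with hT
  have hT0 : 0 < T := by positivity
  have hTK : T ^ (-p1) * (2 : ℝ) ^ ((j : ℝ) * d * (1 - p1 / u1)) = K := by
    rw [Real.rpow_mul (by norm_num), ← hN, hT, ← Real.rpow_mul (by positivity)]
    have : 1 / p1 * -p1 = -1 := by field_simp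
    rw [this, Real.rpow_neg_one, ← ha]
    have : 0 < N ^ (1 - a) := by positivity
    field_simp
  have hθK : θ * K = η * k := by rw [hK]; field_simp
  have hθq : C * θ ^ (-(1 / (g - 1))) * N = η * k := by
    rw [hθ, ← Real.rpow_mul (by positivity)]
    have : (g - 1) * -(1 / (g - 1)) = -1 := by field_simp
    rw [this, Real.rpow_neg_one]
    field_simp
  obtain ⟨F, hF, hFc⟩ := count_finset (ι := idx d j) p1 θ K _ hθ0 (hCb θ hθ0)
  rw [card_idx, ← hN, hθq, hθK] at hFc
  have hcard : F.card * F.card ≤ 2 ^ (k - 1) := by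
    have h3 : ((F.card * F.card : ℕ) : ℝ) ≤ (2 : ℝ) ^ ((k : ℝ) / 2) := by
      push_cast
      calc (F.card : ℝ) * F.card ≤ Real.exp (η * k + η * k) * Real.exp (η * k + η * k) := by gcongr
        _ = (2 : ℝ) ^ ((k : ℝ) / 2) := by
          rw [← Real.exp_add, Real.rpow_def_of_pos (by norm_num), hη]
          congr 1; ring
    rcases Nat.lt_or_ge k 2 with hk2 | hk2
    · have hk1 : k = 1 := by omega
      subst hk1
      have h4 : ((F.card * F.card : ℕ) : ℝ) < 2 := by
        refine lt_of_le_of_lt h3 ?_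
        calc (2 : ℝ) ^ (((1 : ℕ) : ℝ) / 2) < (2 : ℝ) ^ (1 : ℝ) :=
              Real.rpow_lt_rpow_of_exponent_lt (by norm_num) (by norm_num)
          _ = 2 := by norm_num
      have h5 : F.card * F.card < 2 := by exact_mod_cast h4
      simpa using Nat.lt_succ_iff.1 h5
    · have h4 : (2 : ℝ) ^ ((k : ℝ) / 2) ≤ (2 : ℝ) ^ (k - 1) := by
        rw [← Real.rpow_natCast]
        apply Real.rpow_le_rpow_of_exponent_le (by norm_num)
        rw [Nat.cast_sub hk]
        have : (2 : ℝ) ≤ k := by exact_mod_cast hk2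
        push_cast; linarith
      exact_mod_cast h3.trans h4
  have hent := entropy_le d u1 p1 u2 p2 hp1 hp1u1 hp2 hp2u2 h1 h2 j k T K hT0 hTK F hF hcard
  have h2real : ∀ x : ℝ, (2 : ℝ≥0∞) ^ x = ENNReal.ofReal ((2 : ℝ) ^ x) := by
    intro x
    rw [← ENNReal.ofReal_rpow_of_pos (by norm_num)]
    simp
  have hkr : (k : ℝ≥0∞) ^ (1 / r) = ENNReal.ofReal ((k : ℝ) ^ (1 / r)) := by
    rw [← ENNReal.ofReal_rpow_of_pos hk0]
    simp
  refine (mul_le_mul_right hent _).trans (le_of_eq ?_)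
  rw [h2real, h2real, hkr, ← ENNReal.ofReal_mul (by positivity),
    ← ENNReal.ofReal_mul (by positivity), ← ENNReal.ofReal_mul (by positivity)]
  congr 1
  have hNx : ∀ x : ℝ, (2 : ℝ) ^ ((j : ℝ) * d * x) = N ^ x := fun x => by
    rw [Real.rpow_mul (by norm_num), ← hN]
  rw [hNx, hNx]
  have hbase : N ^ (1 - a) / K = B * (N ^ (g - a) * (k : ℝ) ^ (-g)) := by
    rw [hK, hB, hθ, Real.mul_rpow (by positivity) (by positivity),
      Real.div_rpow hN0.le hk0.le]
    have e1 : N ^ (g - a) = N ^ (1 - a) * N ^ (g - 1) := by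
      rw [← Real.rpow_add hN0]; congr 1; ring
    have e2 : (k : ℝ) ^ (-g) = ((k : ℝ) ^ (g - 1))⁻¹ * (k : ℝ)⁻¹ := by
      rw [← Real.rpow_neg hk0.le, ← Real.rpow_neg_one, ← Real.rpow_add hk0]; congr 1; ring
    rw [e1, e2]
    have : 0 < (k : ℝ) ^ (g - 1) := by positivity
    field_simp
  have hTd : T ^ (1 - p1 / p2) = B ^ δ * (N ^ ((g - a) * δ) * (k : ℝ) ^ (-(1 / r))) := by
    rw [hT, ← Real.rpow_mul (by positivity)]
    have : 1 / p1 * (1 - p1 / p2) = δ := by rw [hδ]; field_simp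
    rw [this, hbase, Real.mul_rpow hB0.le (by positivity),
      Real.mul_rpow (by positivity) (by positivity), ← Real.rpow_mul hN0.le,
      ← Real.rpow_mul hk0.le, neg_mul, hgδ]
  have hNe : N ^ (1 / r - 1 / u1 + 1 / u2) =
      N ^ ((g - a) * δ) * N ^ (1 / u2 - p1 / (u1 * p2)) := by
    rw [← Real.rpow_add hN0, sub_mul, hgδ, ha, hδ]
    congr 1
    field_simp
    ring
  rw [hTd, hNe, Real.rpow_neg hk0.le]
  have : 0 < (k : ℝ) ^ (1 / r) := by positivity
  field_simp
end

section
/- Let d ≥ 1 be an integer and 0 < p_i ≤ u_i < ∞ for i = 1, 2, with p1 < p2 and p1/u1 < p2/u2. Then there exists a constant c > 0 such that for all j ∈ ℕ and all k ∈ ℕ: e_{2k−1}(id_j) ≤ c · 2^{jd(1/u2 − p1/(p2·u1))} · 2^{jd(1/p1 − 1/u1)(1 − p1/p2)} · A_{j,k}, where A_{j,k} = 1 if 1 ≤ k ≤ log(2^{jd+1}); A_{j,k} = (k^{−1} · log(1 + 2^{jd}/k))^{1/p1 − 1/p2} if log(2^{jd+1}) ≤ k ≤ 2^{jd+1}; and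 A_{j,k} = 2^{−k/2^{jd}} · 2^{−jd(1/p1 − 1/p2)} if k ≥ 2^{jd+1}. -/
open scoped ENNReal NNReal

namespace S17

/-- The finite index set of cubes of level `j` inside the cube `Q_{ν,k}`. -/
noncomputable def cubeFin (d j ν : ℕ) (k : Fin d → ℤ) : Finset (Fin d → ℤ) :=
  Fintype.piFinset fun i => Finset.Ico (k i * 2 ^ (j - ν)) ((k i + 1) * 2 ^ (j - ν))

lemma mem_cubeFin (d j ν : ℕ) (k m : Fin d → ℤ) :
    m ∈ cubeFin d j ν k ↔ cubeSub d j ν m k := by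
  simp [cubeFin, cubeSub, Fintype.mem_piFinset]

lemma card_cubeFin (d j ν : ℕ) (k : Fin d → ℤ) :
    (cubeFin d j ν k).card = 2 ^ ((j - ν) * d) := by
  have : ∀ i, (k i + 1) * 2 ^ (j - ν) - k i * 2 ^ (j - ν) = ((2 ^ (j - ν) : ℕ) : ℤ) := by
    intro i; push_cast; ring
  rw [cubeFin, Fintype.card_piFinset]
  simp only [Int.card_Ico, this, Int.toNat_natCast]
  simp [pow_mul]

lemma mNorm_eq (d : ℕ) (u p : ℝ) (j : ℕ) (lam : (Fin d → ℤ) → ℂ) :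
    mNorm d u p j lam = ⨆ νk : {νk : ℕ × (Fin d → ℤ) // νk.1 ≤ j ∧ inUnitCube d νk.1 νk.2},
    (2 : ℝ≥0∞) ^ ((d : ℝ) * ((j : ℝ) - (νk.1.1 : ℝ)) * (1 / u - 1 / p)) *
      (∑ m ∈ cubeFin d j νk.1.1 νk.1.2, ((‖lam m‖₊ : ℝ≥0∞)) ^ p) ^ (1 / p) := by
  unfold mNorm
  congr 1
  funext νk
  congr 2
  have h : {m : Fin d → ℤ | cubeSub d j νk.1.1 m νk.1.2} = ↑(cubeFin d j νk.1.1 νk.1.2) := by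
    ext m; simp [mem_cubeFin]
  have := Finset.tsum_subtype' (cubeFin d j νk.1.1 νk.1.2) (fun m => ((‖lam m‖₊ : ℝ≥0∞)) ^ p)
  rw [← this, ← h]
  rfl

lemma sub_unit {d j ν : ℕ} (hν : ν ≤ j) {k m : Fin d → ℤ} (hk : inUnitCube d ν k)
    (hm : cubeSub d j ν m k) : m ∈ cubeFin d j 0 0 := by
  rw [mem_cubeFin]
  intro i
  obtain ⟨h1, h2⟩ := hk i
  obtain ⟨h3, h4⟩ := hm i
  have hp : (0 : ℤ) < 2 ^ (j - ν) := by positivity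
  have e : (2 : ℤ) ^ j = 2 ^ ν * 2 ^ (j - ν) := by rw [← pow_add]; congr 1; omega
  constructor
  · simp; nlinarith
  · simp [e]; nlinarith [mul_le_mul_of_nonneg_right (show k i + 1 ≤ 2 ^ ν by omega) hp.le]

lemma mNorm_mono (d : ℕ) (u p : ℝ) (hp : 0 < p) (j : ℕ) (x y : (Fin d → ℤ) → ℂ)
    (h : ∀ m, ‖y m‖ ≤ ‖x m‖) : mNorm d u p j y ≤ mNorm d u p j x := by
  rw [mNorm_eq, mNorm_eq]
  refine iSup_mono fun νk => ?_
  gcongr with m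
  exact h m

lemma local_bound {d : ℕ} {u p : ℝ} (hp : 0 < p) {j : ℕ} {x : (Fin d → ℤ) → ℂ}
    (hx : mNorm d u p j x ≤ 1) {ν : ℕ} {k : Fin d → ℤ} (hν : ν ≤ j) (hk : inUnitCube d ν k) :
    ∑ m ∈ cubeFin d j ν k, ((‖x m‖₊ : ℝ≥0∞)) ^ p ≤
      (2 : ℝ≥0∞) ^ ((d : ℝ) * ((j : ℝ) - ν) * (1 - p / u)) := by
  rw [mNorm_eq] at hx
  have h := (le_iSup (fun νk : {νk : ℕ × (Fin d → ℤ) // νk.1 ≤ j ∧ inUnitCube d νk.1 νk.2} =>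
    (2 : ℝ≥0∞) ^ ((d : ℝ) * ((j : ℝ) - (νk.1.1 : ℝ)) * (1 / u - 1 / p)) *
      (∑ m ∈ cubeFin d j νk.1.1 νk.1.2, ((‖x m‖₊ : ℝ≥0∞)) ^ p) ^ (1 / p))
      ⟨(ν, k), hν, hk⟩).trans hx
  simp only at h
  set S := ∑ m ∈ cubeFin d j ν k, ((‖x m‖₊ : ℝ≥0∞)) ^ p
  have h2 : S ^ (1 / p) ≤ (2 : ℝ≥0∞) ^ (-((d : ℝ) * ((j : ℝ) - ν) * (1 / u - 1 / p))) := by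
    rw [ENNReal.rpow_neg, ENNReal.le_inv_iff_mul_le, mul_comm]
    exact h
  have h3 := ENNReal.rpow_le_rpow h2 hp.le
  rw [← ENNReal.rpow_mul, ← ENNReal.rpow_mul, one_div_mul_cancel hp.ne', ENNReal.rpow_one] at h3
  refine h3.trans (le_of_eq ?_)
  congr 1
  field_simp
  ring

lemma dim_le (d j ν : ℕ) : (d : ℝ) * ((j : ℝ) - ν) ≤ (j : ℝ) * d := by
  have : (0 : ℝ) ≤ d * ν := by positivity
  linarith

lemma interp {d : ℕ} {u1 p1 u2 p2 : ℝ}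
    (hp1 : 0 < p1) (hp2 : 0 < p2) (h1 : p1 < p2) (h2 : p1 / u1 ≤ p2 / u2) {j : ℕ}
    {x : (Fin d → ℤ) → ℂ} (hx : mNorm d u1 p1 j x ≤ 1) (D : ℝ≥0∞)
    (hD : ∀ m ∈ cubeFin d j 0 0, (‖x m‖₊ : ℝ≥0∞) ≤ D) :
    mNorm d u2 p2 j x ≤ (2 : ℝ≥0∞) ^ (((j : ℝ) * d) * (1 / u2 - p1 / (p2 * u1))) *
      D ^ (1 - p1 / p2) := by
  rw [mNorm_eq d u2]
  refine iSup_le ?_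
  rintro ⟨⟨ν, k⟩, hν, hk⟩
  simp only at hν hk ⊢
  have hb : ∑ m ∈ cubeFin d j ν k, ((‖x m‖₊ : ℝ≥0∞)) ^ p2 ≤
      D ^ (p2 - p1) * (2 : ℝ≥0∞) ^ ((d : ℝ) * ((j : ℝ) - ν) * (1 - p1 / u1)) := by
    calc _ ≤ ∑ m ∈ cubeFin d j ν k, D ^ (p2 - p1) * ((‖x m‖₊ : ℝ≥0∞)) ^ p1 := by
          refine Finset.sum_le_sum fun m hm => ?_
          have : (‖x m‖₊ : ℝ≥0∞) ^ p2 = (‖x m‖₊ : ℝ≥0∞) ^ (p2 - p1) * (‖x m‖₊ : ℝ≥0∞) ^ p1 := by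
            rw [← ENNReal.rpow_add_of_nonneg _ _ (by linarith) hp1.le]; congr 1; ring
          rw [this]
          have h3 := hD m (sub_unit hν hk ((mem_cubeFin ..).1 hm))
          have h4 : 0 ≤ p2 - p1 := by linarith
          gcongr
      _ ≤ _ := by
          rw [← Finset.mul_sum]
          gcongr
          exact local_bound hp1 hx hν hk
  calc _ ≤ (2 : ℝ≥0∞) ^ ((d : ℝ) * ((j : ℝ) - ν) * (1 / u2 - 1 / p2)) *
        (D ^ (p2 - p1) * (2 : ℝ≥0∞) ^ ((d : ℝ) * ((j : ℝ) - ν) * (1 - p1 / u1))) ^ (1 / p2) := by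
        gcongr
    _ = (2 : ℝ≥0∞) ^ ((d : ℝ) * ((j : ℝ) - ν) * (1 / u2 - p1 / (p2 * u1))) *
      D ^ (1 - p1 / p2) := by
        rw [ENNReal.mul_rpow_of_nonneg _ _ (by positivity), ← ENNReal.rpow_mul, ← ENNReal.rpow_mul,
          mul_left_comm, ← ENNReal.rpow_add _ _ (by norm_num) (by norm_num), mul_comm]
        congr 2
        · field_simp; ring
        · field_simp
    _ ≤ _ := by
        have hc := dim_le d j ν
        gcongr
        · norm_num
        · have : p1 / (p2 * u1) = (p1 / u1) / p2 := by rw [div_div, mul_comm]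
          have h5 : 1 / u2 = (p2 / u2) / p2 := by field_simp
          rw [this, h5, ← sub_div]
          exact div_nonneg (by linarith) hp2.le

lemma sup_bound {d : ℕ} {u p : ℝ} (hp : 0 < p) (hu : p ≤ u) {j : ℕ}
    {x : (Fin d → ℤ) → ℂ} (D : ℝ≥0∞)
    (hD : ∀ m ∈ cubeFin d j 0 0, (‖x m‖₊ : ℝ≥0∞) ≤ D) :
    mNorm d u p j x ≤ (2 : ℝ≥0∞) ^ (((j : ℝ) * d) * (1 / u)) * D := by
  rw [mNorm_eq d u]
  refine iSup_le ?_
  rintro ⟨⟨ν, k⟩, hν, hk⟩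
  simp only at hν hk ⊢
  have hb : ∑ m ∈ cubeFin d j ν k, ((‖x m‖₊ : ℝ≥0∞)) ^ p ≤
      (2 : ℝ≥0∞) ^ ((d : ℝ) * ((j : ℝ) - ν)) * D ^ p := by
    calc _ ≤ ∑ m ∈ cubeFin d j ν k, D ^ p := by
          refine Finset.sum_le_sum fun m hm => ?_
          have h3 := hD m (sub_unit hν hk ((mem_cubeFin ..).1 hm))
          gcongr
      _ = _ := by
          rw [Finset.sum_const, card_cubeFin, nsmul_eq_mul]
          congr 1
          push_cast
          rw [← ENNReal.rpow_natCast]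
          congr 1
          push_cast [Nat.cast_sub hν]
          ring
  calc _ ≤ (2 : ℝ≥0∞) ^ ((d : ℝ) * ((j : ℝ) - ν) * (1 / u - 1 / p)) *
        ((2 : ℝ≥0∞) ^ ((d : ℝ) * ((j : ℝ) - ν)) * D ^ p) ^ (1 / p) := by
        gcongr
    _ = (2 : ℝ≥0∞) ^ ((d : ℝ) * ((j : ℝ) - ν) * (1 / u)) * D := by
        rw [ENNReal.mul_rpow_of_nonneg _ _ (by positivity), ← ENNReal.rpow_mul, ← ENNReal.rpow_mul,
          ← mul_assoc, ← ENNReal.rpow_add _ _ (by norm_num) (by norm_num),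
          mul_one_div_cancel hp.ne', ENNReal.rpow_one]
        congr 2
        ring
    _ ≤ _ := by
        have : 0 < u := by linarith
        have hc := dim_le d j ν
        gcongr
        norm_num

lemma sup_le_one {d : ℕ} {u p : ℝ} (hp : 0 < p) {j : ℕ} {x : (Fin d → ℤ) → ℂ}
    (hx : mNorm d u p j x ≤ 1) : ∀ m ∈ cubeFin d j 0 0, (‖x m‖₊ : ℝ≥0∞) ≤ 1 := by
  intro m hm
  rw [mem_cubeFin] at hm
  have h := local_bound (k := m) hp hx le_rfl (fun i => by simpa using hm i)
  have h0 : m ∈ cubeFin d j j m := by rw [mem_cubeFin]; intro i; simp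
  have h1 := (Finset.single_le_sum (f := fun m => ((‖x m‖₊ : ℝ≥0∞)) ^ p)
    (fun _ _ => zero_le) h0).trans h
  simp only [sub_self, mul_zero, zero_mul, ENNReal.rpow_zero] at h1
  by_contra hc
  push Not at hc
  exact absurd h1 (not_le.2 (ENNReal.one_lt_rpow hc hp))

lemma real_sum {d : ℕ} {u p : ℝ} (hp : 0 < p) {j : ℕ} {x : (Fin d → ℤ) → ℂ}
    (hx : mNorm d u p j x ≤ 1) : ∑ m ∈ cubeFin d j 0 0, ‖x m‖ ^ p ≤
      (2 : ℝ) ^ ((j : ℝ) * d * (1 - p / u)) := by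
  have h := local_bound (ν := 0) (k := 0) hp hx (Nat.zero_le _) (fun i => by simp)
  have e1 : ∀ m, ((‖x m‖₊ : ℝ≥0∞)) ^ p = ENNReal.ofReal (‖x m‖ ^ p) := by
    intro m
    rw [← ENNReal.ofReal_rpow_of_nonneg (norm_nonneg _) hp.le, ofReal_norm]; rfl
  have e2 : (2 : ℝ≥0∞) ^ ((d : ℝ) * ((j : ℝ) - (0 : ℕ)) * (1 - p / u)) =
      ENNReal.ofReal ((2 : ℝ) ^ ((j : ℝ) * d * (1 - p / u))) := by
    rw [← ENNReal.ofReal_rpow_of_pos (by norm_num)]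
    congr 1
    · simp
    · push_cast; ring
  rw [e2] at h
  simp only [e1] at h
  rw [← ENNReal.ofReal_sum_of_nonneg (fun _ _ => by positivity)] at h
  exact (ENNReal.ofReal_le_ofReal_iff (by positivity)).1 h

lemma entropy_le {Λ : Type*} [AddCommGroup Λ] (N₁ N₂ : Λ → ℝ≥0∞) (n : ℕ) (ε : ℝ≥0∞)
    (hε : 0 < ε) (T : Finset Λ) (hT : T.card ≤ 2 ^ (n - 1))
    (h : ∀ x, N₁ x ≤ 1 → ∃ c ∈ T, N₂ (x - c) ≤ ε) : entropyNumber N₁ N₂ n ≤ ε := by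
  refine sInf_le ⟨hε, fun i => T.toList.getD i 0, fun x hx => ?_⟩
  obtain ⟨c, hc, hxc⟩ := h x hx
  obtain ⟨i, hi, rfl⟩ := List.getElem_of_mem (Finset.mem_toList.2 hc)
  refine ⟨⟨i, lt_of_lt_of_le (by simpa using hi) hT⟩, ?_⟩
  show N₂ (x - T.toList.getD i 0) ≤ ε
  rw [List.getD_eq_getElem _ _ hi]
  exact hxc

lemma count {ι : Type*} [Fintype ι] [DecidableEq ι] (p t s : ℝ) (ht : 0 < t) (L : ℕ) :
    (((Fintype.piFinset fun _ : ι => Finset.Icc (-(L : ℤ)) L).filter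
      (fun z => ∑ i, |(z i : ℝ)| ^ p ≤ s)).card : ℝ) ≤
      Real.exp (t * s) * (∑ a ∈ Finset.Icc (-(L : ℤ)) L, Real.exp (-t * |(a : ℝ)| ^ p)) ^
        Fintype.card ι := by
  rw [Finset.card_eq_sum_ones, Nat.cast_sum]
  calc _ ≤ ∑ z ∈ ((Fintype.piFinset fun _ : ι => Finset.Icc (-(L : ℤ)) L).filter
      (fun z => ∑ i, |(z i : ℝ)| ^ p ≤ s)), Real.exp (t * (s - ∑ i, |(z i : ℝ)| ^ p)) := by
        refine Finset.sum_le_sum fun z hz => ?_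
        rw [Nat.cast_one]
        refine Real.one_le_exp (mul_nonneg ht.le ?_)
        have := (Finset.mem_filter.1 hz).2
        linarith
    _ ≤ ∑ z ∈ (Fintype.piFinset fun _ : ι => Finset.Icc (-(L : ℤ)) L),
          Real.exp (t * (s - ∑ i, |(z i : ℝ)| ^ p)) :=
        Finset.sum_le_sum_of_subset_of_nonneg (Finset.filter_subset _ _)
          (fun _ _ _ => (Real.exp_pos _).le)
    _ = ∑ z ∈ (Fintype.piFinset fun _ : ι => Finset.Icc (-(L : ℤ)) L),
          Real.exp (t * s) * ∏ i, Real.exp (-t * |(z i : ℝ)| ^ p) := by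
        refine Finset.sum_congr rfl fun z _ => ?_
        rw [← Real.exp_sum, ← Real.exp_add, ← Finset.mul_sum]
        congr 1; ring
    _ = _ := by
        rw [← Finset.mul_sum, ← Finset.prod_univ_sum
          (fun _ : ι => Finset.Icc (-(L : ℤ)) L) (fun _ a => Real.exp (-t * |(a : ℝ)| ^ p)),
          Finset.prod_const, Finset.card_univ]

end S17

namespace S17

lemma exp_bound (p : ℝ) (hp : 0 < p) :
    ∃ C : ℝ, 0 < C ∧ ∀ y : ℝ, 0 ≤ y → Real.exp (-(y ^ p)) ≤ C * (1 / (1 + y) ^ 2) := by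
  obtain ⟨n, hn⟩ := exists_nat_ge (2 / p)
  have hf : (1 : ℝ) ≤ (n.factorial : ℝ) := by exact_mod_cast n.factorial_pos
  refine ⟨4 * n.factorial, by positivity, fun y hy => ?_⟩
  rw [Real.exp_neg, mul_one_div, inv_eq_one_div, div_le_div_iff₀ (Real.exp_pos _) (by positivity),
    one_mul]
  have hyp : 0 ≤ y ^ p := Real.rpow_nonneg hy _
  rcases le_total y 1 with h | h
  · have h1 : 1 ≤ Real.exp (y ^ p) := Real.one_le_exp hyp
    nlinarith
  · have h1 := Real.pow_div_factorial_le_exp (y ^ p) hyp n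
    rw [div_le_iff₀ (by positivity)] at h1
    have h2 : y ^ (2 : ℝ) ≤ (y ^ p) ^ n := by
      rw [← Real.rpow_mul_natCast hy]
      refine Real.rpow_le_rpow_of_exponent_le h ?_
      rw [div_le_iff₀ hp] at hn
      linarith
    rw [Real.rpow_two] at h2
    nlinarith

lemma tele (τ : ℝ) (hτ : 0 < τ) (L : ℕ) :
    ∑ a ∈ Finset.range L, 1 / (1 + τ * ((a : ℝ) + 1)) ^ 2 ≤ 1 / τ * (1 - 1 / (1 + τ * L)) := by
  induction L with
  | zero => simp
  | succ n ih =>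
    rw [Finset.sum_range_succ]
    push_cast
    have h : 1 / (1 + τ * ((n : ℝ) + 1)) ^ 2 ≤
        1 / τ * (1 / (1 + τ * n) - 1 / (1 + τ * ((n : ℝ) + 1))) := by
      have e : 1 / τ * (1 / (1 + τ * n) - 1 / (1 + τ * ((n : ℝ) + 1))) =
          1 / ((1 + τ * n) * (1 + τ * ((n : ℝ) + 1))) := by
        field_simp; ring
      rw [e]
      apply one_div_le_one_div_of_le (by positivity)
      rw [sq]
      gcongr
      linarith
    linarith

lemma W_bound (p : ℝ) (hp : 0 < p) : ∃ A : ℝ, 0 < A ∧ ∀ t : ℝ, 0 < t → ∀ L : ℕ,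
    ∑ a ∈ Finset.range L, Real.exp (-t * ((a : ℝ) + 1) ^ p) ≤ A * (1 / t ^ (1 / p)) := by
  obtain ⟨C, hC, h⟩ := exp_bound p hp
  refine ⟨C, hC, fun t ht L => ?_⟩
  have hτ : 0 < t ^ (1 / p) := by positivity
  calc _ ≤ ∑ a ∈ Finset.range L, C * (1 / (1 + t ^ (1 / p) * ((a : ℝ) + 1)) ^ 2) := by
        refine Finset.sum_le_sum fun a _ => ?_
        have := h (t ^ (1 / p) * ((a : ℝ) + 1)) (by positivity)
        rwa [Real.mul_rpow hτ.le (by positivity), ← Real.rpow_mul ht.le, one_div_mul_cancel hp.ne',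
          Real.rpow_one, ← neg_mul] at this
    _ ≤ _ := by
        rw [← Finset.mul_sum]
        gcongr
        refine (tele _ hτ L).trans ?_
        have : 0 ≤ 1 / (1 + t ^ (1 / p) * L) := by positivity
        have h2 : 0 ≤ 1 / t ^ (1 / p) := by positivity
        nlinarith

lemma icc_sum (f : ℝ → ℝ) (L : ℕ) : ∑ a ∈ Finset.Icc (-(L : ℤ)) L, f |(a : ℝ)| =
    f 0 + 2 * ∑ a ∈ Finset.range L, f ((a : ℝ) + 1) := by
  induction L with
  | zero => simp
  | succ n ih =>
    have e : Finset.Icc (-((n + 1 : ℕ) : ℤ)) ((n + 1 : ℕ) : ℤ) =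
        insert (-((n : ℤ) + 1)) (insert ((n : ℤ) + 1) (Finset.Icc (-(n : ℤ)) n)) := by
      ext a; simp only [Finset.mem_Icc, Finset.mem_insert]; push_cast; omega
    rw [e, Finset.sum_insert (by simp; omega), Finset.sum_insert (by simp), ih,
      Finset.sum_range_succ]
    have h1 : |(((n : ℤ) + 1 : ℤ) : ℝ)| = (n : ℝ) + 1 := by
      push_cast; exact abs_of_pos (by positivity)
    have h2 : |((-((n : ℤ) + 1) : ℤ) : ℝ)| = (n : ℝ) + 1 := by
      rw [Int.cast_neg, abs_neg, h1]
    rw [h1, h2]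
    ring

/-- Both bounds for the one-dimensional theta-type sum. -/
lemma S_bound (p : ℝ) (hp : 0 < p) : ∃ A : ℝ, 0 < A ∧
    (∀ t : ℝ, 0 < t → ∀ L : ℕ, ∑ a ∈ Finset.Icc (-(L : ℤ)) L, Real.exp (-t * |(a : ℝ)| ^ p) ≤
      1 + A * (1 / t ^ (1 / p))) ∧
    (∀ t : ℝ, 1 ≤ t → ∀ L : ℕ, ∑ a ∈ Finset.Icc (-(L : ℤ)) L, Real.exp (-t * |(a : ℝ)| ^ p) ≤
      1 + A * Real.exp (-t)) := by
  obtain ⟨A, hA, h⟩ := W_bound p hp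
  have he : 1 ≤ Real.exp 1 := Real.one_le_exp (by norm_num)
  refine ⟨2 * A * Real.exp 1, by positivity, fun t ht L => ?_, fun t ht L => ?_⟩
  · rw [icc_sum (fun r => Real.exp (-t * r ^ p))]
    simp only [Real.zero_rpow hp.ne', mul_zero, Real.exp_zero]
    have h1 := h t ht L
    have : 0 ≤ A * (1 / t ^ (1 / p)) := by positivity
    nlinarith
  · rw [icc_sum (fun r => Real.exp (-t * r ^ p))]
    simp only [Real.zero_rpow hp.ne', mul_zero, Real.exp_zero]
    have h1 := h 1 one_pos L
    have h2 : ∑ a ∈ Finset.range L, Real.exp (-t * ((a : ℝ) + 1) ^ p) ≤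
        Real.exp (-t) * Real.exp 1 *
          ∑ a ∈ Finset.range L, Real.exp (-1 * ((a : ℝ) + 1) ^ p) := by
      rw [Finset.mul_sum]
      refine Finset.sum_le_sum fun a _ => ?_
      rw [← Real.exp_add, ← Real.exp_add]
      apply Real.exp_le_exp.2
      have : 1 ≤ ((a : ℝ) + 1) ^ p := Real.one_le_rpow (by linarith [a.cast_nonneg (α := ℝ)]) hp.le
      nlinarith
    rw [Real.one_rpow, div_one, mul_one] at h1
    have h3 : 0 < Real.exp (-t) * Real.exp 1 := by positivity
    have h4 := mul_le_mul_of_nonneg_left h1 h3.le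
    linarith

/-- Truncation towards zero. -/
noncomputable def tr (r : ℝ) : ℤ := if 0 ≤ r then ⌊r⌋ else -⌊-r⌋

lemma tr_spec (r : ℝ) : |(tr r : ℝ)| ≤ |r| ∧ |r - tr r| ≤ |r| ∧ |r - tr r| ≤ 1 := by
  unfold tr
  split_ifs with h
  · have h1 := Int.floor_le r
    have h2 := Int.lt_floor_add_one r
    have h3 : (0 : ℝ) ≤ ⌊r⌋ := by exact_mod_cast Int.floor_nonneg.2 h
    rw [abs_of_nonneg h, abs_of_nonneg h3, abs_of_nonneg (by linarith)]
    refine ⟨h1, ?_, ?_⟩ <;> linarith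
  · push Not at h
    have h1 := Int.floor_le (-r)
    have h2 := Int.lt_floor_add_one (-r)
    have h3 : (0 : ℝ) ≤ ⌊-r⌋ := by exact_mod_cast Int.floor_nonneg.2 (by linarith)
    push_cast
    rw [abs_of_neg h, abs_neg, abs_of_nonneg h3, abs_of_nonpos (by linarith)]
    refine ⟨h1, ?_, ?_⟩ <;> linarith

lemma tr_scaled (r δ : ℝ) (hδ : 0 < δ) :
    |(tr (r / δ) : ℝ)| ≤ |r| / δ ∧ |r - δ * tr (r / δ)| ≤ |r| ∧ |r - δ * tr (r / δ)| ≤ δ := by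
  obtain ⟨h1, h2, h3⟩ := tr_spec (r / δ)
  have e : r - δ * tr (r / δ) = δ * (r / δ - tr (r / δ)) := by field_simp
  rw [abs_div, abs_of_pos hδ] at h1 h2
  rw [e, abs_mul, abs_of_pos hδ]
  refine ⟨h1, ?_, ?_⟩
  · rw [le_div_iff₀ hδ] at h2; linarith
  · nlinarith

lemma cplx (x : ℂ) (δ : ℝ) (hδ : 0 < δ) :
    ‖x - (⟨δ * tr (x.re / δ), δ * tr (x.im / δ)⟩ : ℂ)‖ ≤ ‖x‖ ∧
    ‖x - (⟨δ * tr (x.re / δ), δ * tr (x.im / δ)⟩ : ℂ)‖ ≤ 2 * δ := by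
  obtain ⟨-, a2, a3⟩ := tr_scaled x.re δ hδ
  obtain ⟨-, b2, b3⟩ := tr_scaled x.im δ hδ
  constructor
  · rw [Complex.norm_def, Complex.norm_def]
    apply Real.sqrt_le_sqrt
    simp only [Complex.normSq_apply, Complex.sub_re, Complex.sub_im]
    have := sq_le_sq.2 a2
    have := sq_le_sq.2 b2
    nlinarith
  · refine (Complex.norm_le_abs_re_add_abs_im _).trans ?_
    simp only [Complex.sub_re, Complex.sub_im]
    linarith

open Classical in
lemma cover (d j n : ℕ) (N₁ N₂ : ((Fin d → ℤ) → ℂ) → ℝ≥0∞) (p δ t X : ℝ) (ε : ℝ≥0∞) (hε : 0 < ε)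
    (hp : 0 < p) (hδ : 0 < δ) (ht : 0 < t) (hX : 0 ≤ X)
    (hsum : ∀ x, N₁ x ≤ 1 → ∑ m ∈ cubeFin d j 0 0, ‖x m‖ ^ p ≤ X)
    (hcount : ∀ L : ℕ, Real.exp (t * (2 * X / δ ^ p)) *
      (∑ a ∈ Finset.Icc (-(L : ℤ)) L, Real.exp (-t * |(a : ℝ)| ^ p)) ^ (2 * 2 ^ (j * d)) ≤
        2 ^ (n - 1))
    (htgt : ∀ x y, N₁ x ≤ 1 → (∀ m, ‖y m‖ ≤ ‖x m‖) → (∀ m ∈ cubeFin d j 0 0, ‖y m‖ ≤ 2 * δ) →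
      N₂ y ≤ ε) :
    entropyNumber N₁ N₂ n ≤ ε := by
  set I := cubeFin d j 0 0 with hI
  set S := 2 * X / δ ^ p with hS
  have hS0 : 0 ≤ S := by positivity
  obtain ⟨L, hL⟩ := exists_nat_ge (S ^ (1 / p))
  let G := ((Fintype.piFinset fun _ : I × Bool => Finset.Icc (-(L : ℤ)) L).filter
      (fun z => ∑ i, |(z i : ℝ)| ^ p ≤ S))
  let dec : (I × Bool → ℤ) → ((Fin d → ℤ) → ℂ) := fun z m =>
    if h : m ∈ I then ⟨δ * z (⟨m, h⟩, false), δ * z (⟨m, h⟩, true)⟩ else 0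
  refine entropy_le N₁ N₂ n ε hε (G.image dec) ?_ ?_
  · refine Finset.card_image_le.trans ?_
    have e : Fintype.card (I × Bool) = 2 * 2 ^ (j * d) := by
      simp [hI, card_cubeFin, mul_comm]
    have h := count (ι := I × Bool) p t S ht L
    rw [e] at h
    have h2 : (G.card : ℝ) ≤ 2 ^ (n - 1) := h.trans (hcount L)
    exact_mod_cast h2
  · intro x hx
    let z : I × Bool → ℤ := fun i => if i.2 then tr ((x i.1).im / δ) else tr ((x i.1).re / δ)
    have hz : ∑ i, |(z i : ℝ)| ^ p ≤ S := by
      rw [Fintype.sum_prod_type]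
      simp only [Fintype.sum_bool, z, if_true, Bool.false_eq_true, if_false]
      calc _ ≤ ∑ m : I, 2 / δ ^ p * ‖x m‖ ^ p := by
            refine Finset.sum_le_sum fun m _ => ?_
            have a1 := (tr_scaled (x m).re δ hδ).1
            have b1 := (tr_scaled (x m).im δ hδ).1
            have a2 : |(tr ((x m).re / δ) : ℝ)| ^ p ≤ (‖x m‖ / δ) ^ p := by
              refine Real.rpow_le_rpow (abs_nonneg _) (a1.trans ?_) hp.le
              gcongr
              exact Complex.abs_re_le_norm _
            have b2 : |(tr ((x m).im / δ) : ℝ)| ^ p ≤ (‖x m‖ / δ) ^ p := by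
              refine Real.rpow_le_rpow (abs_nonneg _) (b1.trans ?_) hp.le
              gcongr
              exact Complex.abs_im_le_norm _
            rw [Real.div_rpow (norm_nonneg _) hδ.le] at a2 b2
            have : 2 / δ ^ p * ‖x m‖ ^ p = ‖x m‖ ^ p / δ ^ p + ‖x m‖ ^ p / δ ^ p := by ring
            linarith
        _ = 2 / δ ^ p * ∑ m ∈ I, ‖x m‖ ^ p := by
            rw [← Finset.mul_sum, Finset.sum_coe_sort I (fun m => ‖x m‖ ^ p)]
        _ ≤ 2 / δ ^ p * X := by
            gcongr
            exact hsum x hx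
        _ = S := by rw [hS]; ring
    have hzL : ∀ i, z i ∈ Finset.Icc (-(L : ℤ)) L := by
      intro i
      rw [Finset.mem_Icc, ← abs_le]
      have h1 : |(z i : ℝ)| ^ p ≤ S := (Finset.single_le_sum (f := fun i => |(z i : ℝ)| ^ p)
        (fun _ _ => by positivity) (Finset.mem_univ i)).trans hz
      have h2 : |(z i : ℝ)| ≤ L := by
        refine le_trans ?_ hL
        have := Real.rpow_le_rpow (by positivity) h1 (show 0 ≤ 1 / p by positivity)
        rwa [← Real.rpow_mul (abs_nonneg _), mul_one_div_cancel hp.ne', Real.rpow_one] at this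
      exact_mod_cast h2
    refine ⟨dec z, Finset.mem_image_of_mem _ (Finset.mem_filter.2
      ⟨Fintype.mem_piFinset.2 hzL, hz⟩), ?_⟩
    refine htgt x _ hx (fun m => ?_) (fun m hm => ?_)
    · simp only [Pi.sub_apply, dec]
      split_ifs with h
      · simpa [z] using (cplx (x m) δ hδ).1
      · simp
    · simp only [Pi.sub_apply, dec]
      rw [dif_pos hm]
      simpa [z] using (cplx (x m) δ hδ).2

end S17

namespace S17

lemma count2 (A Bc l k s E : ℝ) (N : ℕ) (kn : ℕ) (hk : k = kn) (hk2 : 2 ≤ kn) (hA : 0 < A)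
    (hB : Bc = 1 + 16 * A) (hN : 0 < N) (hkN : k ≤ 2 * N) (hl : l = Real.log (1 + N / k))
    (hs : s = k / (4 * (1 + 3 * Bc) * l))
    (hE0 : 0 ≤ E) (hE : E ≤ 1 + A * Real.exp (-(l + Bc))) :
    Real.exp ((l + Bc) * s) * E ^ (2 * N) ≤ 2 ^ (2 * kn - 1 - 1) := by
  have hN' : (0 : ℝ) < N := by exact_mod_cast hN
  have hk0 : 0 < k := by rw [hk]; exact_mod_cast (by omega : 0 < kn)
  have hB1 : 0 < Bc := by rw [hB]; positivity
  have hq : (1 : ℝ) / 2 ≤ N / k := by rw [div_le_div_iff₀ (by norm_num) hk0]; linarith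
  have hl3 : 1 / 3 ≤ l := by
    rw [hl]
    have h1 := Real.one_sub_inv_le_log_of_pos (show (0 : ℝ) < 1 + N / k by linarith)
    have h2 : (1 + (N : ℝ) / k)⁻¹ ≤ (3 / 2 : ℝ)⁻¹ := inv_anti₀ (by norm_num) (by linarith)
    norm_num at h2 ⊢
    linarith
  have hexp : A * Real.exp (-(l + Bc)) * (2 * N) ≤ k / 4 := by
    have e1 : Real.exp (-(l + Bc)) ≤ (k / N) * (1 / (16 * A)) := by
      rw [neg_add, Real.exp_add]
      have h1 : Real.exp (-l) ≤ k / N := by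
        rw [hl, Real.exp_neg, Real.exp_log (by linarith), inv_le_comm₀ (by linarith) (by positivity),
          inv_div]
        linarith
      have h2 : Real.exp (-Bc) ≤ 1 / (16 * A) := by
        rw [Real.exp_neg, inv_eq_one_div]
        apply one_div_le_one_div_of_le (by positivity)
        have := Real.add_one_le_exp Bc
        linarith
      gcongr
    calc _ ≤ A * ((k / N) * (1 / (16 * A))) * (2 * N) := by gcongr
      _ = k / 8 := by field_simp; norm_num
      _ ≤ _ := by linarith
  have hts : (l + Bc) * s ≤ k / 4 := by
    rw [hs, mul_div_assoc', div_le_div_iff₀ (by positivity) (by norm_num)]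
    have : l + Bc ≤ (1 + 3 * Bc) * l := by nlinarith
    nlinarith
  have hpow : E ^ (2 * N) ≤ Real.exp (k / 4) := by
    calc E ^ (2 * N) ≤ (Real.exp (A * Real.exp (-(l + Bc)))) ^ (2 * N) := by
          gcongr
          refine hE.trans ?_
          rw [add_comm]
          exact Real.add_one_le_exp _
      _ = Real.exp (A * Real.exp (-(l + Bc)) * (2 * N)) := by
          rw [← Real.exp_nat_mul]; congr 1; push_cast; ring
      _ ≤ _ := Real.exp_le_exp.2 hexp
  calc _ ≤ Real.exp (k / 4) * Real.exp (k / 4) := by gcongr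
    _ = Real.exp (k / 2) := by rw [← Real.exp_add]; congr 1; ring
    _ ≤ Real.exp (kn * Real.log 2) := by
        apply Real.exp_le_exp.2
        rw [← hk]
        have := Real.log_two_gt_d9
        nlinarith
    _ = 2 ^ kn := by rw [Real.exp_nat_mul, Real.exp_log (by norm_num)]
    _ ≤ _ := pow_le_pow_right₀ (by norm_num) (by omega)

lemma count3 (A' ε E : ℝ) (N kn : ℕ) (hA : 0 < A') (hN : 0 < N) (hkN : 2 * N ≤ kn)
    (hε : ε = 12 * A' * 2 ^ (-(kn : ℝ) / N)) (hE0 : 0 ≤ E) (hE : E ≤ 1 + A' / ε) :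
    Real.exp ((N : ℝ) / 2) * E ^ (2 * N) ≤ 2 ^ (2 * kn - 1 - 1) := by
  have hN' : (0 : ℝ) < N := by exact_mod_cast hN
  have hkN' : (2 : ℝ) * N ≤ kn := by exact_mod_cast hkN
  set y : ℝ := 2 ^ ((kn : ℝ) / N) with hy
  have hy0 : 0 < y := by positivity
  have h4 : 4 ≤ y := by
    have : (4 : ℝ) = 2 ^ (2 : ℝ) := by norm_num
    rw [this, hy]
    apply Real.rpow_le_rpow_of_exponent_le (by norm_num)
    rw [le_div_iff₀ hN']; exact hkN'
  have hyε : A' / ε = y / 12 := by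
    rw [hε, neg_div, Real.rpow_neg (by norm_num), ← hy]
    field_simp
  have hyN : y ^ (2 * N) = 2 ^ (2 * kn) := by
    rw [hy, ← Real.rpow_mul_natCast (by norm_num), ← Real.rpow_natCast]
    congr 1; push_cast; field_simp
  have hexp : Real.exp ((N : ℝ) / 2) ≤ 2 ^ N := by
    rw [← Real.exp_log (show (0 : ℝ) < 2 by norm_num), ← Real.exp_nat_mul,
      Real.exp_log (show (0 : ℝ) < 2 by norm_num)]
    apply Real.exp_le_exp.2
    have := Real.log_two_gt_d9
    nlinarith
  calc _ ≤ 2 ^ N * (y / 3) ^ (2 * N) := by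
        gcongr
        linarith
    _ = (2 / 9) ^ N * 2 ^ (2 * kn) := by
        rw [div_pow, hyN, pow_mul 3, div_pow]; norm_num; ring
    _ ≤ (1 / 4) * 2 ^ (2 * kn) := by
        gcongr
        calc ((2 : ℝ) / 9) ^ N ≤ (2 / 9) ^ 1 :=
              pow_le_pow_of_le_one (by norm_num) (by norm_num) hN
          _ ≤ _ := by norm_num
    _ = _ := by
        obtain ⟨w, hw⟩ : ∃ w, 2 * kn = w + 2 := ⟨2 * kn - 2, by omega⟩
        have hw2 : 2 * kn - 1 - 1 = w := by omega
        rw [hw2, hw, pow_add]; ring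

lemma two_rpow (r : ℝ) : (2 : ℝ≥0∞) ^ r = ENNReal.ofReal ((2 : ℝ) ^ r) := by
  rw [← ENNReal.ofReal_rpow_of_pos (by norm_num)]; simp

lemma nn_ofReal {x : ℂ} {D : ℝ} (h : ‖x‖ ≤ D) : (‖x‖₊ : ℝ≥0∞) ≤ ENNReal.ofReal D := by
  have : (‖x‖₊ : ℝ≥0∞) = ENNReal.ofReal ‖x‖ := by rw [ofReal_norm]; rfl
  rw [this]
  exact ENNReal.ofReal_le_ofReal h

lemma case1 (d : ℕ) (u1 p1 u2 p2 : ℝ)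
    (hp1 : 0 < p1) (hp2 : 0 < p2)
    (h1 : p1 < p2) (h2 : p1 / u1 < p2 / u2) (j n : ℕ) : entropyNumber (mNorm d u1 p1 j) (mNorm d u2 p2 j) n ≤
    (2 : ℝ≥0∞) ^ (((j : ℝ) * d) * (1 / u2 - p1 / (p2 * u1))) := by
  refine entropy_le _ _ _ _ (ENNReal.rpow_pos (by norm_num) (by norm_num)) {0}
    (by simpa using Nat.one_le_two_pow) fun x hx => ⟨0, by simp, ?_⟩
  have := interp hp1 hp2 h1 h2.le hx 1 (sup_le_one hp1 hx)
  simpa using this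

lemma case2 (d : ℕ) (u1 p1 u2 p2 : ℝ)
    (hp1 : 0 < p1) (hp1u1 : p1 ≤ u1) (hp2 : 0 < p2)
    (h1 : p1 < p2) (h2 : p1 / u1 < p2 / u2) : ∃ c : ℝ, 0 < c ∧ ∀ j k : ℕ, 2 ≤ k → (k : ℝ) ≤ 2 ^ (j * d + 1) →
    entropyNumber (mNorm d u1 p1 j) (mNorm d u2 p2 j) (2 * k - 1) ≤
            ENNReal.ofReal c * ((2 : ℝ≥0∞) ^ (((j : ℝ) * d) * (1 / u2 - p1 / (p2 * u1))) *
              (2 : ℝ≥0∞) ^ (((j : ℝ) * d) * (1 / p1 - 1 / u1) * (1 - p1 / p2))) *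
              ENNReal.ofReal ((Real.log (1 + 2 ^ (j * d) / (k : ℝ)) / (k : ℝ)) ^
                (1 / p1 - 1 / p2)) := by
  obtain ⟨A, hA, -, hS⟩ := S_bound p1 hp1
  have hu1 : 0 < u1 := by linarith
  set Bc := 1 + 16 * A with hB
  have hB0 : 0 < Bc := by positivity
  set K := (8 * (1 + 3 * Bc)) ^ (1 / p1) with hK
  have hK0 : 0 < K := by positivity
  have hKp : K ^ p1 = 8 * (1 + 3 * Bc) := by
    rw [hK, ← Real.rpow_mul (by positivity), one_div_mul_cancel hp1.ne', Real.rpow_one]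
  refine ⟨(2 * K) ^ (1 - p1 / p2), by positivity, fun j k hk hkN => ?_⟩
  have hk0 : (0 : ℝ) < k := by exact_mod_cast (by omega : 0 < k)
  set l := Real.log (1 + 2 ^ (j * d) / (k : ℝ)) with hl
  have hl0 : 0 < l := Real.log_pos (by
    have : (0 : ℝ) < 2 ^ (j * d) / (k : ℝ) := by positivity
    linarith)
  set R := (2 : ℝ) ^ (((j : ℝ) * d) * (1 / p1 - 1 / u1)) with hR
  have hR0 : 0 < R := by positivity
  set X := (2 : ℝ) ^ ((j : ℝ) * d * (1 - p1 / u1)) with hX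
  have hX0 : 0 < X := by positivity
  have hRX : R ^ p1 = X := by
    rw [hR, ← Real.rpow_mul (by norm_num), hX]
    congr 1; field_simp
  set δ := R * K * (l / k) ^ (1 / p1) with hδ
  have hδ0 : 0 < δ := by positivity
  have hδp : δ ^ p1 = X * (8 * (1 + 3 * Bc)) * (l / k) := by
    rw [hδ, Real.mul_rpow (by positivity) (by positivity), Real.mul_rpow hR0.le hK0.le, hRX, hKp,
      ← Real.rpow_mul (by positivity), one_div_mul_cancel hp1.ne', Real.rpow_one]
  have hfin : (ENNReal.ofReal ((2 * K) ^ (1 - p1 / p2)) *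
      ((2 : ℝ≥0∞) ^ (((j : ℝ) * d) * (1 / u2 - p1 / (p2 * u1))) *
              (2 : ℝ≥0∞) ^ (((j : ℝ) * d) * (1 / p1 - 1 / u1) * (1 - p1 / p2))) *
              ENNReal.ofReal ((l / (k : ℝ)) ^ (1 / p1 - 1 / p2))) =
      (2 : ℝ≥0∞) ^ (((j : ℝ) * d) * (1 / u2 - p1 / (p2 * u1))) *
      ENNReal.ofReal (2 * δ) ^ (1 - p1 / p2) := by
    have e : (2 * δ) ^ (1 - p1 / p2) = (2 * K) ^ (1 - p1 / p2) *
        2 ^ (((j : ℝ) * d) * (1 / p1 - 1 / u1) * (1 - p1 / p2)) *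
          (l / (k : ℝ)) ^ (1 / p1 - 1 / p2) := by
      have e1 : 2 * δ = 2 * K * R * (l / k) ^ (1 / p1) := by rw [hδ]; ring
      rw [e1, Real.mul_rpow (by positivity) (by positivity),
        Real.mul_rpow (by positivity) (by positivity), hR,
        ← Real.rpow_mul (by norm_num), ← Real.rpow_mul (by positivity)]
      congr 2
      field_simp
    rw [ENNReal.ofReal_rpow_of_pos (by positivity), e, two_rpow (_ * (1 - p1 / p2)),
      ENNReal.ofReal_mul (by positivity), ENNReal.ofReal_mul (by positivity)]
    ring
  rw [hfin]
  refine cover d j (2 * k - 1) _ _ p1 δ (l + Bc) X _ ?_ hp1 hδ0 (by positivity) hX0.le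
    (fun x hx => real_sum hp1 hx) (fun L => ?_) (fun x y hx hyx hy => ?_)
  · refine ENNReal.mul_pos (ENNReal.rpow_pos (by norm_num) (by norm_num)).ne'
      (ENNReal.rpow_pos (by simpa using hδ0) ENNReal.ofReal_ne_top).ne'
  · refine count2 A Bc l k _ _ (2 ^ (j * d)) k rfl hk hA hB (by positivity) ?_ ?_ ?_ ?_ ?_
    · push_cast; rw [pow_succ] at hkN; linarith
    · rw [hl]; push_cast; rfl
    · rw [hδp]; field_simp; norm_num
    · positivity
    · exact hS _ (by linarith [hB, hA]) L
  · exact interp hp1 hp2 h1 h2.le ((mNorm_mono d u1 p1 hp1 j x y hyx).trans hx) _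
      (fun m hm => nn_ofReal (hy m hm))

lemma case3 (d : ℕ) (u1 p1 u2 p2 : ℝ)
    (hp1 : 0 < p1) (hp1u1 : p1 ≤ u1) (hp2 : 0 < p2) (hp2u2 : p2 ≤ u2)
      : ∃ c : ℝ, 0 < c ∧ ∀ j k : ℕ, (2 : ℝ) ^ (j * d + 1) ≤ (k : ℝ) →
          entropyNumber (mNorm d u1 p1 j) (mNorm d u2 p2 j) (2 * k - 1) ≤
            ENNReal.ofReal c * ((2 : ℝ≥0∞) ^ (((j : ℝ) * d) * (1 / u2 - p1 / (p2 * u1))) *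
              (2 : ℝ≥0∞) ^ (((j : ℝ) * d) * (1 / p1 - 1 / u1) * (1 - p1 / p2))) *
              ((2 : ℝ≥0∞) ^ (-(k : ℝ) / 2 ^ (j * d)) *
                (2 : ℝ≥0∞) ^ (-((j : ℝ) * d) * (1 / p1 - 1 / p2))) := by
  obtain ⟨A, hA, hS, -⟩ := S_bound p1 hp1
  have hu1 : 0 < u1 := by linarith
  have hu2 : 0 < u2 := by linarith
  set A' := A * 4 ^ (1 / p1) with hA'
  have hA0 : 0 < A' := by positivity
  refine ⟨2 * (12 * A'), by positivity, fun j k hkN => ?_⟩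
  set ε := 12 * A' * (2 : ℝ) ^ (-(k : ℝ) / (2 ^ (j * d) : ℕ)) with hε
  have hε0 : 0 < ε := by positivity
  set X := (2 : ℝ) ^ ((j : ℝ) * d * (1 - p1 / u1)) with hX
  have hX0 : 0 < X := by positivity
  set δ := ε * (2 : ℝ) ^ (-((j : ℝ) * d * (1 / u1))) with hδ
  have hδ0 : 0 < δ := by positivity
  have hδp : ε ^ p1 / 4 * (2 * X / δ ^ p1) = ((2 ^ (j * d) : ℕ) : ℝ) / 2 := by
    rw [hδ, Real.mul_rpow hε0.le (by positivity), ← Real.rpow_mul (by norm_num)]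
    have e1 : X = ((2 ^ (j * d) : ℕ) : ℝ) * 2 ^ (-((j : ℝ) * d * (1 / u1)) * p1) := by
      rw [hX]; push_cast
      rw [← Real.rpow_natCast, ← Real.rpow_add (by norm_num)]
      congr 1; push_cast; field_simp; ring
    rw [e1]
    have : 0 < ε ^ p1 := by positivity
    field_simp; norm_num
  have hfin : ENNReal.ofReal (2 * (12 * A')) *
        ((2 : ℝ≥0∞) ^ (((j : ℝ) * d) * (1 / u2 - p1 / (p2 * u1))) *
              (2 : ℝ≥0∞) ^ (((j : ℝ) * d) * (1 / p1 - 1 / u1) * (1 - p1 / p2))) *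
              ((2 : ℝ≥0∞) ^ (-(k : ℝ) / 2 ^ (j * d)) *
                (2 : ℝ≥0∞) ^ (-((j : ℝ) * d) * (1 / p1 - 1 / p2))) =
      (2 : ℝ≥0∞) ^ (((j : ℝ) * d) * (1 / u2)) * ENNReal.ofReal (2 * δ) := by
    have e : 2 * δ = 2 * (12 * A') * 2 ^ (-(k : ℝ) / 2 ^ (j * d)) *
        2 ^ (-((j : ℝ) * d * (1 / u1))) := by
      rw [hδ, hε]; push_cast; ring
    rw [e, ENNReal.ofReal_mul (p := 2 * (12 * A') * 2 ^ (-(k : ℝ) / 2 ^ (j * d))) (by positivity),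
      ENNReal.ofReal_mul (p := 2 * (12 * A')) (by positivity), ← two_rpow, ← two_rpow]
    have e2 : ((2 : ℝ≥0∞) ^ (((j : ℝ) * d) * (1 / u2 - p1 / (p2 * u1))) *
              (2 : ℝ≥0∞) ^ (((j : ℝ) * d) * (1 / p1 - 1 / u1) * (1 - p1 / p2))) *
                (2 : ℝ≥0∞) ^ (-((j : ℝ) * d) * (1 / p1 - 1 / p2)) =
        (2 : ℝ≥0∞) ^ (((j : ℝ) * d) * (1 / u2)) * 2 ^ (-((j : ℝ) * d * (1 / u1))) := by
      rw [← ENNReal.rpow_add _ _ (by norm_num) (by norm_num),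
        ← ENNReal.rpow_add _ _ (by norm_num) (by norm_num),
        ← ENNReal.rpow_add _ _ (by norm_num) (by norm_num)]
      congr 1
      field_simp
      ring
    calc _ = ENNReal.ofReal (2 * (12 * A')) * (2 : ℝ≥0∞) ^ (-(k : ℝ) / 2 ^ (j * d)) *
        (((2 : ℝ≥0∞) ^ (((j : ℝ) * d) * (1 / u2 - p1 / (p2 * u1))) *
              (2 : ℝ≥0∞) ^ (((j : ℝ) * d) * (1 / p1 - 1 / u1) * (1 - p1 / p2))) *
                (2 : ℝ≥0∞) ^ (-((j : ℝ) * d) * (1 / p1 - 1 / p2))) := by ring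
      _ = _ := by rw [e2]; ring
  rw [hfin]
  refine cover d j (2 * k - 1) _ _ p1 δ (ε ^ p1 / 4) X _ ?_ hp1 hδ0 (by positivity) hX0.le
    (fun x hx => real_sum hp1 hx) (fun L => ?_) (fun x y hx hyx hy => ?_)
  · refine ENNReal.mul_pos (ENNReal.rpow_pos (by norm_num) (by norm_num)).ne' (by simpa using hδ0)
  · rw [hδp]
    refine count3 A' ε _ (2 ^ (j * d)) k hA0 (by positivity) ?_ hε (by positivity) ?_
    · have : (2 * 2 ^ (j * d) : ℝ) ≤ k := by rw [pow_succ] at hkN; linarith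
      exact_mod_cast this
    · refine (hS _ (by positivity) L).trans (le_of_eq ?_)
      rw [Real.div_rpow (by positivity) (by norm_num), ← Real.rpow_mul hε0.le,
        mul_one_div_cancel hp1.ne', Real.rpow_one, hA']
      field_simp
  · exact sup_bound hp2 hp2u2 _ (fun m hm => nn_ofReal (hy m hm))

end S17

theorem stmt17 (d : ℕ) (hd : 1 ≤ d) (u1 p1 u2 p2 : ℝ)
    (hp1 : 0 < p1) (hp1u1 : p1 ≤ u1) (hp2 : 0 < p2) (hp2u2 : p2 ≤ u2)
    (h1 : p1 < p2) (h2 : p1 / u1 < p2 / u2) :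
    ∃ c : ℝ, 0 < c ∧ ∀ j : ℕ, 1 ≤ j → ∀ k : ℕ, 1 ≤ k →
      (((k : ℝ) ≤ Real.log (2 ^ (j * d + 1)) →
          entropyNumber (mNorm d u1 p1 j) (mNorm d u2 p2 j) (2 * k - 1) ≤
            ENNReal.ofReal c * ((2 : ℝ≥0∞) ^ (((j : ℝ) * d) * (1 / u2 - p1 / (p2 * u1))) *
              (2 : ℝ≥0∞) ^ (((j : ℝ) * d) * (1 / p1 - 1 / u1) * (1 - p1 / p2)))) ∧
        (Real.log (2 ^ (j * d + 1)) ≤ (k : ℝ) ∧ (k : ℝ) ≤ 2 ^ (j * d + 1) →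
          entropyNumber (mNorm d u1 p1 j) (mNorm d u2 p2 j) (2 * k - 1) ≤
            ENNReal.ofReal c * ((2 : ℝ≥0∞) ^ (((j : ℝ) * d) * (1 / u2 - p1 / (p2 * u1))) *
              (2 : ℝ≥0∞) ^ (((j : ℝ) * d) * (1 / p1 - 1 / u1) * (1 - p1 / p2))) *
              ENNReal.ofReal ((Real.log (1 + 2 ^ (j * d) / (k : ℝ)) / (k : ℝ)) ^
                (1 / p1 - 1 / p2))) ∧
        ((2 : ℝ) ^ (j * d + 1) ≤ (k : ℝ) →
          entropyNumber (mNorm d u1 p1 j) (mNorm d u2 p2 j) (2 * k - 1) ≤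
            ENNReal.ofReal c * ((2 : ℝ≥0∞) ^ (((j : ℝ) * d) * (1 / u2 - p1 / (p2 * u1))) *
              (2 : ℝ≥0∞) ^ (((j : ℝ) * d) * (1 / p1 - 1 / u1) * (1 - p1 / p2))) *
              ((2 : ℝ≥0∞) ^ (-(k : ℝ) / 2 ^ (j * d)) *
                (2 : ℝ≥0∞) ^ (-((j : ℝ) * d) * (1 / p1 - 1 / p2))))) := by
  obtain ⟨c2, hc2, H2⟩ := S17.case2 d u1 p1 u2 p2 hp1 hp1u1 hp2 h1 h2
  obtain ⟨c3, hc3, H3⟩ := S17.case3 d u1 p1 u2 p2 hp1 hp1u1 hp2 hp2u2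
  refine ⟨1 + c2 + c3, by positivity, fun j hj k hk => ⟨fun _ => ?_, fun h => ?_, fun h => ?_⟩⟩
  · refine (S17.case1 d u1 p1 u2 p2 hp1 hp2 h1 h2 j (2 * k - 1)).trans ?_
    have e1 : (1 : ℝ≥0∞) ≤ ENNReal.ofReal (1 + c2 + c3) := by
      rw [ENNReal.one_le_ofReal]; linarith
    have e2 : (1 : ℝ≥0∞) ≤ (2 : ℝ≥0∞) ^ (((j : ℝ) * d) * (1 / p1 - 1 / u1) * (1 - p1 / p2)) := by
      rw [← ENNReal.rpow_zero (x := 2)]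
      refine ENNReal.rpow_le_rpow_of_exponent_le (by norm_num) ?_
      have g1 : 0 ≤ 1 / p1 - 1 / u1 := sub_nonneg.2 (one_div_le_one_div_of_le hp1 hp1u1)
      have g2 : 0 ≤ 1 - p1 / p2 := sub_nonneg.2 ((div_le_one hp2).2 h1.le)
      positivity
    calc _ = 1 * ((2 : ℝ≥0∞) ^ (((j : ℝ) * d) * (1 / u2 - p1 / (p2 * u1))) * 1) := by
          rw [one_mul, mul_one]
      _ ≤ _ := by gcongr
  · have hk2 : 2 ≤ k := by
      by_contra hc
      have hk1 : k = 1 := by omega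
      have := h.1
      rw [hk1, Real.log_pow] at this
      have hjd : (2 : ℝ) ≤ ((j * d + 1 : ℕ) : ℝ) := by
        exact_mod_cast Nat.succ_le_succ (Nat.mul_pos hj hd)
      have := Real.log_two_gt_d9
      push_cast at *
      nlinarith
    refine (H2 j k hk2 h.2).trans ?_
    gcongr
    linarith
  · refine (H3 j k h).trans ?_
    gcongr
    linarith
end

section
/- Let d ≥ 1 be an integer, 0 < p2 ≤ p1 ≤ u2 ≤ u1 < ∞ and r > 0. Then there exists a constant c > 0 such that for all j ∈ ℕ₀: sup_{n ∈ ℕ} n^{1/r} e_n(id_j) ≤ c · 2^{jd(1/r − 1/u1 + 1/u2)}. -/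
open scoped ENNReal NNReal

lemma aux_add_rpow (a b : ℝ≥0∞) (q : ℝ) (hq : 0 < q) :
    (a + b) ^ q ≤ 2 ^ q * (a ^ q + b ^ q) := by
  rcases le_total a b with h | h
  · calc (a + b) ^ q ≤ (2 * b) ^ q := by
          apply ENNReal.rpow_le_rpow _ hq.le; rw [two_mul]; gcongr
      _ = 2 ^ q * b ^ q := ENNReal.mul_rpow_of_nonneg _ _ hq.le
      _ ≤ _ := by gcongr; exact le_add_self
  · calc (a + b) ^ q ≤ (2 * a) ^ q := by
          apply ENNReal.rpow_le_rpow _ hq.le; rw [two_mul]; gcongr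
      _ = 2 ^ q * a ^ q := ENNReal.mul_rpow_of_nonneg _ _ hq.le
      _ ≤ _ := by gcongr; exact le_self_add

lemma cubeSub_inUnit (d j ν : ℕ) (hν : ν ≤ j) (m k : Fin d → ℤ) (hk : inUnitCube d ν k)
    (h : cubeSub d j ν m k) : inUnitCube d j m := by
  intro i
  have h1 := h i
  have h2 := hk i
  have h3 : (0:ℤ) < 2 ^ (j - ν) := by positivity
  have h4 : (2:ℤ) ^ j = 2 ^ ν * 2 ^ (j - ν) := by rw [← pow_add]; congr 1; omega
  constructor
  · nlinarith
  · rw [h4]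
    have : (k i + 1) * 2 ^ (j - ν) ≤ 2 ^ ν * 2 ^ (j - ν) := by
      apply mul_le_mul_of_nonneg_right _ h3.le; omega
    omega

lemma inUnit_self (d j : ℕ) (m : Fin d → ℤ) : cubeSub d j j m m := by
  intro i; simp

noncomputable def boxFin (d j ν : ℕ) (k : Fin d → ℤ) : Finset (Fin d → ℤ) :=
  Fintype.piFinset (fun i => Finset.Ico (k i * 2 ^ (j - ν)) ((k i + 1) * 2 ^ (j - ν)))

lemma mem_boxFin (d j ν : ℕ) (m k : Fin d → ℤ) : m ∈ boxFin d j ν k ↔ cubeSub d j ν m k := by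
  simp [boxFin, cubeSub, Fintype.mem_piFinset]

lemma card_boxFin (d j ν : ℕ) (k : Fin d → ℤ) : (boxFin d j ν k).card = 2 ^ (d * (j - ν)) := by
  rw [boxFin, Fintype.card_piFinset]
  have : ∀ i, (Finset.Ico (k i * 2 ^ (j - ν)) ((k i + 1) * 2 ^ (j - ν))).card = 2 ^ (j - ν) := by
    intro i
    rw [Int.card_Ico]
    have : (k i + 1) * 2 ^ (j - ν) - k i * 2 ^ (j - ν) = ((2 ^ (j - ν) : ℕ) : ℤ) := by
      push_cast; ring
    rw [this, Int.toNat_natCast]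
  simp only [this]
  simp [← pow_mul, mul_comm]

lemma inUnit_iff (d j : ℕ) (m : Fin d → ℤ) : inUnitCube d j m ↔ m ∈ boxFin d j 0 0 := by
  rw [mem_boxFin]; simp [inUnitCube, cubeSub]

noncomputable instance unitFintype (d j : ℕ) : Fintype {m : Fin d → ℤ // inUnitCube d j m} :=
  Fintype.subtype (boxFin d j 0 0) (fun m => (inUnit_iff d j m).symm)

lemma card_unit (d j : ℕ) : Fintype.card {m : Fin d → ℤ // inUnitCube d j m} = 2 ^ (j * d) := by
  rw [Fintype.card_of_subtype (boxFin d j 0 0) (fun m => (inUnit_iff d j m).symm), card_boxFin]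
  simp [mul_comm]

lemma tsum_box (d j ν : ℕ) (k : Fin d → ℤ) (f : (Fin d → ℤ) → ℝ≥0∞) :
    (∑' m : {m : Fin d → ℤ // cubeSub d j ν m k}, f m.1) = ∑ m ∈ boxFin d j ν k, f m := by
  rw [← Finset.tsum_subtype]
  exact (Equiv.tsum_eq (Equiv.subtypeEquivRight (fun m => (mem_boxFin d j ν m k).symm))
    (fun m : {m // m ∈ boxFin d j ν k} => f m.1))

lemma mNorm_congr (d : ℕ) (u p : ℝ) (j : ℕ) (x y : (Fin d → ℤ) → ℂ)
    (h : ∀ m, inUnitCube d j m → x m = y m) : mNorm d u p j x = mNorm d u p j y := by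
  unfold mNorm
  refine iSup_congr fun νk => ?_
  congr 2
  refine tsum_congr fun m => ?_
  rw [h m.1 (cubeSub_inUnit d j _ νk.2.1 _ _ νk.2.2 m.2)]

lemma mNorm_smul (d : ℕ) (u p : ℝ) (hp : 0 < p) (j : ℕ) (t : ℝ) (x : (Fin d → ℤ) → ℂ) :
    mNorm d u p j (t • x) = ENNReal.ofReal |t| * mNorm d u p j x := by
  unfold mNorm
  rw [ENNReal.mul_iSup]
  refine iSup_congr fun νk => ?_
  have : ∀ m : {m : Fin d → ℤ // cubeSub d j νk.1.1 m νk.1.2},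
      ((‖(t • x) m.1‖₊ : ℝ≥0∞)) ^ p = (ENNReal.ofReal |t|) ^ p * ((‖x m.1‖₊ : ℝ≥0∞)) ^ p := by
    intro m
    rw [← ENNReal.mul_rpow_of_nonneg _ _ hp.le]
    congr 1
    rw [Pi.smul_apply, nnnorm_smul, ENNReal.coe_mul]
    congr 1
    rw [← Real.norm_eq_abs, ofReal_norm]; rfl
  simp only [this]
  rw [ENNReal.tsum_mul_left, ENNReal.mul_rpow_of_nonneg _ _ (by positivity), ← ENNReal.rpow_mul,
    mul_one_div_cancel hp.ne', ENNReal.rpow_one]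
  ring

lemma mNorm_add (d : ℕ) (u p : ℝ) (hp : 0 < p) (j : ℕ) (x y : (Fin d → ℤ) → ℂ) :
    mNorm d u p j (x + y) ≤ (2 * 2 ^ (1 / p)) * (mNorm d u p j x + mNorm d u p j y) := by
  have hp' : 0 < 1 / p := by positivity
  conv_lhs => unfold mNorm
  refine iSup_le fun νk => ?_
  have hx : _ ≤ mNorm d u p j x := le_iSup (fun νk : {νk : ℕ × (Fin d → ℤ) // νk.1 ≤ j ∧ inUnitCube d νk.1 νk.2} =>
    (2 : ℝ≥0∞) ^ ((d : ℝ) * ((j : ℝ) - (νk.1.1 : ℝ)) * (1 / u - 1 / p)) *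
      (∑' m : {m : Fin d → ℤ // cubeSub d j νk.1.1 m νk.1.2},
        ((‖x m.1‖₊ : ℝ≥0∞)) ^ p) ^ (1 / p)) νk
  have hy : _ ≤ mNorm d u p j y := le_iSup (fun νk : {νk : ℕ × (Fin d → ℤ) // νk.1 ≤ j ∧ inUnitCube d νk.1 νk.2} =>
    (2 : ℝ≥0∞) ^ ((d : ℝ) * ((j : ℝ) - (νk.1.1 : ℝ)) * (1 / u - 1 / p)) *
      (∑' m : {m : Fin d → ℤ // cubeSub d j νk.1.1 m νk.1.2},
        ((‖y m.1‖₊ : ℝ≥0∞)) ^ p) ^ (1 / p)) νk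
  refine le_trans ?_ (mul_le_mul_right (add_le_add hx hy) _)
  have h1 : (∑' m : {m : Fin d → ℤ // cubeSub d j νk.1.1 m νk.1.2}, ((‖(x + y) m.1‖₊ : ℝ≥0∞)) ^ p)
      ≤ 2 ^ p * ((∑' m : {m : Fin d → ℤ // cubeSub d j νk.1.1 m νk.1.2}, ((‖x m.1‖₊ : ℝ≥0∞)) ^ p) +
        (∑' m : {m : Fin d → ℤ // cubeSub d j νk.1.1 m νk.1.2}, ((‖y m.1‖₊ : ℝ≥0∞)) ^ p)) := by
    rw [← ENNReal.tsum_add, ← ENNReal.tsum_mul_left]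
    refine ENNReal.tsum_le_tsum fun m => ?_
    refine le_trans ?_ (aux_add_rpow _ _ p hp)
    apply ENNReal.rpow_le_rpow _ hp.le
    rw [Pi.add_apply]
    exact_mod_cast nnnorm_add_le (x m.1) (y m.1)
  have h2 := ENNReal.rpow_le_rpow h1 hp'.le
  rw [ENNReal.mul_rpow_of_nonneg _ _ hp'.le, ← ENNReal.rpow_mul,
    mul_one_div_cancel hp.ne', ENNReal.rpow_one] at h2
  have h3 := h2.trans (mul_le_mul_right (aux_add_rpow _ _ (1/p) hp') 2)
  refine (mul_le_mul_right h3 _).trans (le_of_eq ?_)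
  ring

lemma mNorm_lt_top (d : ℕ) (u p : ℝ) (hp : 0 < p) (hpu : p ≤ u) (j : ℕ) (x : (Fin d → ℤ) → ℂ) :
    mNorm d u p j x < ∞ := by
  have hp' : 0 < 1 / p := by positivity
  have : mNorm d u p j x ≤ (∑ m ∈ boxFin d j 0 0, ((‖x m‖₊ : ℝ≥0∞)) ^ p) ^ (1 / p) := by
    unfold mNorm
    refine iSup_le fun νk => ?_
    rw [tsum_box d j _ _ (fun m => ((‖x m‖₊ : ℝ≥0∞)) ^ p)]
    have hA : (2 : ℝ≥0∞) ^ ((d : ℝ) * ((j : ℝ) - (νk.1.1 : ℝ)) * (1 / u - 1 / p)) ≤ 1 := by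
      rw [← ENNReal.rpow_zero (x := 2)]
      apply ENNReal.rpow_le_rpow_of_exponent_le (by norm_num)
      have h1 : 1 / u ≤ 1 / p := one_div_le_one_div_of_le hp hpu
      have h2 : (νk.1.1 : ℝ) ≤ j := by exact_mod_cast νk.2.1
      exact mul_nonpos_of_nonneg_of_nonpos (mul_nonneg (Nat.cast_nonneg d) (by linarith)) (by linarith)
    refine (mul_le_mul' hA le_rfl).trans ?_
    rw [one_mul]
    apply ENNReal.rpow_le_rpow _ hp'.le
    apply Finset.sum_le_sum_of_subset
    intro m hm
    rw [mem_boxFin] at hm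
    rw [← inUnit_iff]
    exact cubeSub_inUnit d j _ νk.2.1 _ _ νk.2.2 hm
  refine this.trans_lt ?_
  apply ENNReal.rpow_lt_top_of_nonneg hp'.le
  rw [ENNReal.sum_ne_top]
  intro m _
  exact ENNReal.rpow_ne_top_of_nonneg hp.le ENNReal.coe_ne_top

lemma coord_le_mNorm (d : ℕ) (u p : ℝ) (hp : 0 < p) (j : ℕ) (x : (Fin d → ℤ) → ℂ) 
    (m : Fin d → ℤ) (hm : inUnitCube d j m) : (‖x m‖₊ : ℝ≥0∞) ≤ mNorm d u p j x := by
  have hp' : 0 < 1 / p := by positivity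
  unfold mNorm
  refine le_trans ?_ (le_iSup _ ⟨(j, m), le_rfl, hm⟩)
  simp only [sub_self, mul_zero, zero_mul, ENNReal.rpow_zero, one_mul]
  rw [tsum_box d j j m (fun m => ((‖x m‖₊ : ℝ≥0∞)) ^ p)]
  have : (‖x m‖₊ : ℝ≥0∞) = (((‖x m‖₊ : ℝ≥0∞)) ^ p) ^ (1 / p) := by
    rw [← ENNReal.rpow_mul, mul_one_div_cancel hp.ne', ENNReal.rpow_one]
  rw [this]
  apply ENNReal.rpow_le_rpow _ hp'.le
  exact Finset.single_le_sum (f := fun m => ((‖x m‖₊ : ℝ≥0∞)) ^ p) (fun _ _ => zero_le)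
    ((mem_boxFin _ _ _ _ _).2 (inUnit_self d j m))

lemma mNorm_embed (d : ℕ) (u1 p1 u2 p2 : ℝ)
    (hp2 : 0 < p2) (hp2p1 : p2 ≤ p1) (hp1u2 : p1 ≤ u2) (hu2u1 : u2 ≤ u1) (j : ℕ)
    (x : (Fin d → ℤ) → ℂ) :
    mNorm d u2 p2 j x ≤ (2 : ℝ≥0∞) ^ (((j : ℝ) * d) * (1 / u2 - 1 / u1)) * mNorm d u1 p1 j x := by
  have hp1 : 0 < p1 := by linarith
  have hu2 : 0 < u2 := by linarith
  have hu1 : 0 < u1 := by linarith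
  have hq : 0 < 1 / p2 := by positivity
  conv_lhs => unfold mNorm
  refine iSup_le fun νk => ?_
  have hx : _ ≤ mNorm d u1 p1 j x := le_iSup (fun νk : {νk : ℕ × (Fin d → ℤ) // νk.1 ≤ j ∧ inUnitCube d νk.1 νk.2} =>
    (2 : ℝ≥0∞) ^ ((d : ℝ) * ((j : ℝ) - (νk.1.1 : ℝ)) * (1 / u1 - 1 / p1)) *
      (∑' m : {m : Fin d → ℤ // cubeSub d j νk.1.1 m νk.1.2},
        ((‖x m.1‖₊ : ℝ≥0∞)) ^ p1) ^ (1 / p1)) νk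
  refine le_trans ?_ (mul_le_mul_right hx _)
  obtain ⟨⟨ν, k⟩, hν, hk⟩ := νk
  simp only at hν hk ⊢
  rw [tsum_box d j _ _ (fun m => ((‖x m‖₊ : ℝ≥0∞)) ^ p1), tsum_box d j _ _ (fun m => ((‖x m‖₊ : ℝ≥0∞)) ^ p2)]
  have h1 := ENNReal.rpow_sum_le_const_mul_sum_rpow (boxFin d j ν k) (fun m => ((‖x m‖₊ : ℝ≥0∞)) ^ p2)
    (p := p1 / p2) ((one_le_div hp2).2 hp2p1)
  simp only [← ENNReal.rpow_mul, mul_div_cancel₀ p1 hp2.ne'] at h1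
  have h2 := ENNReal.rpow_le_rpow h1 (z := 1 / p1) (by positivity)
  rw [← ENNReal.rpow_mul, ENNReal.mul_rpow_of_nonneg _ _ (by positivity), ← ENNReal.rpow_mul,
    card_boxFin] at h2
  have e1 : p1 / p2 * (1 / p1) = 1 / p2 := by field_simp
  have e2 : ((2 ^ (d * (j - ν)) : ℕ) : ℝ≥0∞) ^ ((p1 / p2 - 1) * (1 / p1))
      = (2 : ℝ≥0∞) ^ ((d : ℝ) * ((j : ℝ) - (ν : ℝ)) * (1 / p2 - 1 / p1)) := by
    rw [Nat.cast_pow, ← ENNReal.rpow_natCast, ← ENNReal.rpow_mul]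
    push_cast [Nat.cast_sub hν]
    congr 1
    field_simp
  rw [e1, e2] at h2
  refine (mul_le_mul_right h2 _).trans ?_
  rw [← mul_assoc, ← mul_assoc]
  refine mul_le_mul' ?_ le_rfl
  rw [← ENNReal.rpow_add _ _ (by simp) (by simp), ← ENNReal.rpow_add _ _ (by simp) (by simp)]
  apply ENNReal.rpow_le_rpow_of_exponent_le (by norm_num)
  have h5 : 0 ≤ 1 / u2 - 1 / u1 := sub_nonneg.2 (one_div_le_one_div_of_le hu2 hu2u1)
  have h6 : (0:ℝ) ≤ d * ν * (1 / u2 - 1 / u1) := by positivity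
  nlinarith

open scoped Pointwise in
/-- Volume argument. -/
lemma volume_cover {E : Type*} [NormedAddCommGroup E] [NormedSpace ℝ E] [FiniteDimensional ℝ E]
    [MeasurableSpace E] [BorelSpace E] (F : E → ℝ≥0∞) (hF : Measurable F)
    (K : ℝ) (hK : 1 ≤ K) (hadd : ∀ x y, F (x + y) ≤ ENNReal.ofReal K * (F x + F y))
    (hsmul : ∀ (t : ℝ) x, F (t • x) = ENNReal.ofReal |t| * F x)
    (hfin : ∀ x, F x < ∞) (hbdd : Bornology.IsBounded {x | F x ≤ 1})
    (ε : ℝ) (hε : 0 < ε) (L : ℕ) (hL1 : 1 ≤ L)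
    (hL : (4 * K ^ 2 / ε) ^ (Module.finrank ℝ E) ≤ L) :
    ∃ c : Fin L → E, ∀ x, F x ≤ 1 → ∃ i, F (x - c i) ≤ ENNReal.ofReal ε := by
  classical
  rcases le_total 1 ε with h1 | h1
  · refine ⟨fun _ => 0, fun x hx => ⟨⟨0, hL1⟩, ?_⟩⟩
    rw [sub_zero]
    exact hx.trans (by simpa using ENNReal.ofReal_le_ofReal h1)
  have hK0 : 0 < K := by linarith
  set D := Module.finrank ℝ E
  let μ : MeasureTheory.Measure E := MeasureTheory.Measure.addHaar
  let V : ℝ → Set E := fun t => {x | F x ≤ ENNReal.ofReal t}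
  have hVmeas : ∀ t, MeasurableSet (V t) := fun t => measurableSet_le hF measurable_const
  have hVs : ∀ t, 0 < t → V t = t • V 1 := by
    intro t ht
    ext x
    rw [Set.mem_smul_set_iff_inv_smul_mem₀ ht.ne']
    simp only [V, Set.mem_ofPred_eq, hsmul]
    rw [abs_of_pos (inv_pos.2 ht), ENNReal.ofReal_inv_of_pos ht, ENNReal.ofReal_one,
      mul_comm, ← div_eq_mul_inv, ENNReal.div_le_iff (by simpa using ht) (by simp), one_mul]
  have hVμ : ∀ t, 0 < t → μ (V t) = ENNReal.ofReal (t ^ D) * μ (V 1) := by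
    intro t ht
    rw [hVs t ht, MeasureTheory.Measure.addHaar_smul, abs_of_pos (by positivity)]
  have hV1top : μ (V 1) ≠ ∞ := by
    have : V 1 = {x | F x ≤ 1} := by simp [V]
    rw [this]; exact hbdd.measure_lt_top.ne
  have hV1pos : μ (V 1) ≠ 0 := by
    intro h0
    have hun : (⋃ n : ℕ, V (n + 1)) = Set.univ := by
      ext x
      simp only [Set.mem_iUnion, Set.mem_univ, iff_true]
      obtain ⟨n, hn⟩ := ENNReal.exists_nat_gt (hfin x).ne
      refine ⟨n, hn.le.trans ?_⟩
      rw [← ENNReal.ofReal_natCast]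
      exact ENNReal.ofReal_le_ofReal (by linarith)
    have : μ Set.univ = 0 := by
      rw [← hun, MeasureTheory.measure_iUnion_null_iff]
      intro n
      rw [hVμ _ (by positivity), h0, mul_zero]
    exact (MeasureTheory.Measure.measure_univ_ne_zero.2 (NeZero.ne μ)) this
  have hneg : ∀ x, F (-x) = F x := by
    intro x
    have := hsmul (-1) x
    simpa using this
  let Sep : Finset E → Prop := fun s => (∀ x ∈ s, F x ≤ 1) ∧
    ∀ x ∈ s, ∀ y ∈ s, x ≠ y → ENNReal.ofReal ε < F (x - y)
  set δ : ℝ := ε / (2 * K) with hδ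
  have hδ0 : 0 < δ := by positivity
  have hcard : ∀ s, Sep s → s.card ≤ L := by
    intro s hs
    have hdisj : Set.PairwiseDisjoint (↑s : Set E) (fun x => (fun z => z - x) ⁻¹' V δ) := by
      intro x hx y hy hxy
      rw [Function.onFun, Set.disjoint_left]
      intro z hz1 hz2
      simp only [V, Set.mem_preimage, Set.mem_ofPred_eq] at hz1 hz2
      have h3 := hs.2 x hx y hy hxy
      apply absurd h3; rw [not_lt]
      have : x - y = -(z - x) + (z - y) := by abel
      rw [this]
      refine (hadd _ _).trans ?_
      rw [hneg]
      refine (mul_le_mul_right (add_le_add hz1 hz2) _).trans ?_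
      rw [← ENNReal.ofReal_add hδ0.le hδ0.le, ← ENNReal.ofReal_mul hK0.le]
      apply ENNReal.ofReal_le_ofReal
      rw [hδ]; apply le_of_eq; field_simp; ring
    have hsub : (⋃ x ∈ s, (fun z => z - x) ⁻¹' V δ) ⊆ V (2 * K) := by
      intro z hz
      simp only [Set.mem_iUnion, V, Set.mem_preimage, Set.mem_ofPred_eq] at hz
      obtain ⟨x, hx, hz⟩ := hz
      simp only [V, Set.mem_ofPred_eq]
      have : z = (z - x) + x := by abel
      rw [this]
      refine (hadd _ _).trans ((mul_le_mul_right (add_le_add hz (hs.1 x hx)) _).trans ?_)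
      rw [← ENNReal.ofReal_one, ← ENNReal.ofReal_add hδ0.le zero_le_one, ← ENNReal.ofReal_mul hK0.le]
      apply ENNReal.ofReal_le_ofReal
      have : δ ≤ 1 := by rw [hδ, div_le_one (by positivity)]; linarith
      nlinarith
    have hm := MeasureTheory.measure_mono (μ := μ) hsub
    rw [MeasureTheory.measure_biUnion_finset hdisj
      (fun x _ => (hVmeas δ).preimage (measurable_sub_const x))] at hm
    have htr : ∀ x, μ ((fun z => z - x) ⁻¹' V δ) = μ (V δ) := by
      intro x
      simp only [sub_eq_add_neg]
      exact MeasureTheory.measure_preimage_add_right μ (-x) (V δ)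
    simp only [htr, Finset.sum_const, nsmul_eq_mul] at hm
    rw [hVμ δ hδ0, hVμ (2 * K) (by positivity), ← mul_assoc,
      ENNReal.mul_le_mul_iff_left hV1pos hV1top, ← ENNReal.ofReal_natCast,
      ← ENNReal.ofReal_mul (by positivity), ENNReal.ofReal_le_ofReal_iff (by positivity)] at hm
    have h5 : (s.card : ℝ) ≤ (4 * K ^ 2 / ε) ^ D := by
      have : 4 * K ^ 2 / ε = 2 * K / δ := by rw [hδ]; field_simp; ring
      rw [this, div_pow, le_div_iff₀ (by positivity)]
      exact hm
    exact_mod_cast h5.trans hL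
  let P : ℕ → Prop := fun k => ∃ s, Sep s ∧ s.card = k
  have hP0 : P 0 := ⟨∅, by simp [Sep], rfl⟩
  obtain ⟨s, hs, hsc⟩ : P (Nat.findGreatest P L) := Nat.findGreatest_spec (Nat.zero_le L) hP0
  have hcov : ∀ x, F x ≤ 1 → ∃ y ∈ s, F (x - y) ≤ ENNReal.ofReal ε := by
    intro x hx
    by_contra! hcon
    have hxs : x ∉ s := by
      intro hxs
      have h0 : F 0 = 0 := by simpa using hsmul 0 0
      have := hcon x hxs
      simp [h0] at this
    have hsep : Sep (insert x s) := by
      refine ⟨?_, ?_⟩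
      · intro y hy
        rcases Finset.mem_insert.1 hy with rfl | hy
        · exact hx
        · exact hs.1 y hy
      · intro y hy z hz hyz
        rcases Finset.mem_insert.1 hy with hy1 | hy1 <;>
          rcases Finset.mem_insert.1 hz with hz1 | hz1
        · exact absurd (hy1.trans hz1.symm) hyz
        · rw [hy1]; exact hcon z hz1
        · rw [hz1, ← hneg, neg_sub]; exact hcon y hy1
        · exact hs.2 y hy1 z hz1 hyz
    have hc := hcard _ hsep
    have hPk : P (insert x s).card := ⟨_, hsep, rfl⟩
    have := Nat.le_findGreatest hc hPk
    rw [Finset.card_insert_of_notMem hxs, hsc] at this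
    omega
  refine ⟨fun i => s.toList.getD i 0, fun x hx => ?_⟩
  obtain ⟨y, hy, hxy⟩ := hcov x hx
  obtain ⟨i, hi, hiy⟩ := List.getElem_of_mem (Finset.mem_toList.2 hy)
  have hi' : i < L := by
    rw [Finset.length_toList] at hi
    exact hi.trans_le (hcard s hs)
  refine ⟨⟨i, hi'⟩, ?_⟩
  simp only
  rw [List.getD_eq_getElem _ _ hi, hiy]
  exact hxy

open Classical in
/-- extension by zero -/
noncomputable def extZ (d j : ℕ) (y : {m : Fin d → ℤ // inUnitCube d j m} → ℂ) : (Fin d → ℤ) → ℂ :=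
  fun m => if h : inUnitCube d j m then y ⟨m, h⟩ else 0

lemma mNorm_meas (d : ℕ) (u p : ℝ) (j : ℕ) :
    Measurable (fun y => mNorm d u p j (extZ d j y)) := by
  unfold mNorm
  have hc : ∀ m, Measurable (fun y => extZ d j y m) := by
    intro m
    unfold extZ
    by_cases h : inUnitCube d j m
    · simp only [h, dite_true]; exact measurable_pi_apply _
    · simp only [h, dite_false]; exact measurable_const
  refine Measurable.iSup fun νk => ?_
  refine Measurable.const_mul (Measurable.pow_const (Measurable.ennreal_tsum fun m => ?_) _) _
  exact Measurable.pow_const (hc m.1).nnnorm.coe_nnreal_ennreal _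

lemma mNorm_cover (d : ℕ) (u p : ℝ) (hp : 0 < p) (hpu : p ≤ u) (j : ℕ)
    (ε : ℝ) (hε : 0 < ε) (L : ℕ) (hL1 : 1 ≤ L)
    (hL : (4 * (2 * 2 ^ (1 / p) : ℝ) ^ 2 / ε) ^ (2 * 2 ^ (j * d)) ≤ (L : ℝ)) :
    ∃ c : Fin L → ((Fin d → ℤ) → ℂ), ∀ x, mNorm d u p j x ≤ 1 →
      ∃ i, mNorm d u p j (x - c i) ≤ ENNReal.ofReal ε := by
  have hp' : 0 < 1 / p := by positivity
  have hK1 : (1:ℝ) ≤ 2 ^ (1 / p) := Real.one_le_rpow (by norm_num) hp'.le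
  have hfr : Module.finrank ℝ ({m : Fin d → ℤ // inUnitCube d j m} → ℂ) = 2 * 2 ^ (j * d) := by
    rw [Module.finrank_pi_fintype]
    simp [Complex.finrank_real_complex, card_unit, mul_comm]
  obtain ⟨c, hc⟩ := volume_cover (E := {m : Fin d → ℤ // inUnitCube d j m} → ℂ)
    (fun y => mNorm d u p j (extZ d j y)) (mNorm_meas d u p j) (2 * 2 ^ (1 / p)) (by linarith)
    (by
      intro x y
      have : extZ d j (x + y) = extZ d j x + extZ d j y := by
        ext m; by_cases h : inUnitCube d j m <;> simp [extZ, h]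
      rw [this]
      refine (mNorm_add d u p hp j _ _).trans (le_of_eq ?_)
      congr 1
      rw [ENNReal.ofReal_mul (by norm_num), ← ENNReal.ofReal_rpow_of_pos (by norm_num)]
      simp)
    (by
      intro t x
      have : extZ d j (t • x) = t • extZ d j x := by
        ext m; by_cases h : inUnitCube d j m <;> simp [extZ, h]
      rw [this, mNorm_smul d u p hp])
    (fun x => mNorm_lt_top d u p hp hpu j _)
    (by
      refine (Metric.isBounded_closedBall (x := 0) (r := 1)).subset ?_
      intro x hx
      rw [mem_closedBall_zero_iff, pi_norm_le_iff_of_nonneg zero_le_one]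
      intro m
      have h1 := (coord_le_mNorm d u p hp j (extZ d j x) m.1 m.2).trans hx
      have h2 : extZ d j x m.1 = x m := by simp [extZ, m.2]
      rw [h2] at h1
      exact_mod_cast h1)
    ε hε L hL1 (by rw [hfr]; exact hL)
  refine ⟨fun i => extZ d j (c i), fun x hx => ?_⟩
  have e0 : mNorm d u p j (extZ d j (fun m => x m.1)) = mNorm d u p j x :=
    mNorm_congr d u p j _ _ (by intro m hm; simp [extZ, hm])
  obtain ⟨i, hi⟩ := hc (fun m => x m.1) (by simpa only [e0] using hx)
  refine ⟨i, le_trans (le_of_eq ?_) hi⟩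
  exact mNorm_congr d u p j _ _ (by intro m hm; simp [extZ, hm])

lemma scalar_bound (r : ℝ) (hr : 0 < r) (K : ℝ) (hK : 0 < K) : ∃ c : ℝ, 0 < c ∧ ∀ (N : ℕ) (n : ℕ), 1 ≤ N → 1 ≤ n →
    (n : ℝ) ^ (1 / r) * (4 * K ^ 2 * 2 ^ (-((n : ℝ) - 1) / (2 * N))) ≤ c * (N : ℝ) ^ (1 / r) := by
  set a := 1 / r with ha
  have ha0 : 0 < a := by positivity
  have hb0 : 0 < Real.log 2 / 2 := by have := Real.log_pos one_lt_two; positivity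
  set b := Real.log 2 / 2 with hb
  refine ⟨(a / b) ^ a * (4 * K ^ 2 * 2), by positivity, fun N n hN hn => ?_⟩
  have hN0 : (0:ℝ) < N := by exact_mod_cast hN
  have hN1 : (1:ℝ) ≤ N := by exact_mod_cast hN
  have hn0 : (0:ℝ) < n := by exact_mod_cast hn
  set t : ℝ := n / N with ht
  have ht0 : 0 < t := by positivity
  have hnt : (n : ℝ) = t * N := by rw [ht]; field_simp
  have h1 : t ^ a ≤ (a / b) ^ a * Real.exp (b * t) := by
    have : t = (a / b) * (b * t / a) := by field_simp
    calc t ^ a = (a / b) ^ a * (b * t / a) ^ a := by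
          rw [← Real.mul_rpow (by positivity) (by positivity), ← this]
      _ ≤ (a / b) ^ a * (Real.exp (b * t / a)) ^ a := by
          gcongr
          have := Real.add_one_le_exp (b * t / a)
          linarith
      _ = _ := by rw [← Real.exp_mul]; congr 2; field_simp
  have h2 : (2:ℝ) ^ (-((n : ℝ) - 1) / (2 * N)) ≤ 2 * Real.exp (-(b * t)) := by
    have e : Real.exp (-(b * t)) = (2:ℝ) ^ (-t / 2) := by
      rw [Real.rpow_def_of_pos (by norm_num)]; congr 1; rw [hb]; ring
    rw [e]
    calc (2:ℝ) ^ (-((n : ℝ) - 1) / (2 * N)) ≤ 2 ^ (1 + -t / 2) := by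
          apply Real.rpow_le_rpow_of_exponent_le (by norm_num)
          rw [div_le_iff₀ (by positivity), hnt]
          nlinarith
      _ = _ := by rw [Real.rpow_add (by norm_num), Real.rpow_one]
  calc (n : ℝ) ^ a * (4 * K ^ 2 * 2 ^ (-((n : ℝ) - 1) / (2 * N)))
      ≤ ((a / b) ^ a * Real.exp (b * t) * (N : ℝ) ^ a) * (4 * K ^ 2 * (2 * Real.exp (-(b * t)))) := by
        rw [hnt, Real.mul_rpow ht0.le hN0.le, ← hnt]; gcongr
    _ = _ := by
        have : Real.exp (b * t) * Real.exp (-(b * t)) = 1 := by rw [← Real.exp_add]; simp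
        linear_combination ((a / b) ^ a * (N : ℝ) ^ a * (4 * K ^ 2 * 2)) * this

theorem stmt19 (d : ℕ) (hd : 1 ≤ d) (u1 p1 u2 p2 : ℝ)
    (hp2 : 0 < p2) (hp2p1 : p2 ≤ p1) (hp1u2 : p1 ≤ u2) (hu2u1 : u2 ≤ u1)
    (r : ℝ) (hr : 0 < r) :
    ∃ c : ℝ, 0 < c ∧ ∀ j : ℕ,
      (⨆ n : {n : ℕ // 0 < n}, ((n : ℕ) : ℝ≥0∞) ^ (1 / r) * entropyNumber (mNorm d u1 p1 j) (mNorm d u2 p2 j) (n : ℕ)) ≤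
        ENNReal.ofReal c * (2 : ℝ≥0∞) ^ (((j : ℝ) * d) * (1 / r - 1 / u1 + 1 / u2)) := by
  have hp1 : 0 < p1 := by linarith
  set K : ℝ := 2 * 2 ^ (1 / p1) with hK
  have hK0 : 0 < K := by positivity
  obtain ⟨c, hc0, hc⟩ := scalar_bound r hr K hK0
  refine ⟨c, hc0, fun j => iSup_le fun ⟨n, hn⟩ => ?_⟩
  set ε : ℝ := 4 * K ^ 2 * 2 ^ (-((n : ℝ) - 1) / (2 * (2 ^ (j * d) : ℕ))) with hε
  have hε0 : 0 < ε := by positivity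
  have hcount : (4 * K ^ 2 / ε) ^ (2 * 2 ^ (j * d)) ≤ ((2 ^ (n - 1) : ℕ) : ℝ) := by
    have e : 4 * K ^ 2 / ε = (2:ℝ) ^ (((n : ℝ) - 1) / (2 * (2 ^ (j * d) : ℕ))) := by
      rw [hε, neg_div, Real.rpow_neg (by norm_num)]
      field_simp
    rw [e, ← Real.rpow_natCast, ← Real.rpow_mul (by norm_num)]
    apply le_of_eq
    have e2 : ((n : ℝ) - 1) / (2 * (2 ^ (j * d) : ℕ)) * ((2 * 2 ^ (j * d) : ℕ) : ℝ) = ((n - 1 : ℕ) : ℝ) := by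
      push_cast [Nat.cast_sub hn]
      field_simp
    rw [e2, Real.rpow_natCast]
    push_cast; rfl
  obtain ⟨cc, hcc⟩ := mNorm_cover d u1 p1 hp1 (by linarith) j ε hε0 (2 ^ (n - 1))
    Nat.one_le_two_pow hcount
  set A : ℝ≥0∞ := (2 : ℝ≥0∞) ^ (((j : ℝ) * d) * (1 / u2 - 1 / u1)) with hA
  have hA0 : 0 < A := ENNReal.rpow_pos (by norm_num) (by norm_num)
  have hent : entropyNumber (mNorm d u1 p1 j) (mNorm d u2 p2 j) n ≤ A * ENNReal.ofReal ε := by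
    refine sInf_le ⟨ENNReal.mul_pos hA0.ne' (by simpa using hε0), cc, fun x hx => ?_⟩
    obtain ⟨i, hi⟩ := hcc x hx
    exact ⟨i, (mNorm_embed d u1 p1 u2 p2 hp2 hp2p1 hp1u2 hu2u1 j _).trans (mul_le_mul_right hi _)⟩
  have hs := hc (2 ^ (j * d)) n Nat.one_le_two_pow hn
  have hs2 : (n : ℝ≥0∞) ^ (1 / r) * ENNReal.ofReal ε ≤
      ENNReal.ofReal c * (2 : ℝ≥0∞) ^ (((j : ℝ) * d) * (1 / r)) := by
    have h := ENNReal.ofReal_le_ofReal hs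
    rw [← hε, ENNReal.ofReal_mul (by positivity), ENNReal.ofReal_mul hc0.le,
      ← ENNReal.ofReal_rpow_of_pos (by exact_mod_cast hn),
      ← ENNReal.ofReal_rpow_of_pos (by positivity), ENNReal.ofReal_natCast,
      ENNReal.ofReal_natCast] at h
    refine h.trans (le_of_eq ?_)
    rw [ENNReal.rpow_mul]
    congr 2
    rw [Nat.cast_pow, ← ENNReal.rpow_natCast]
    push_cast; rfl
  calc (n : ℝ≥0∞) ^ (1 / r) * entropyNumber (mNorm d u1 p1 j) (mNorm d u2 p2 j) n
      ≤ (n : ℝ≥0∞) ^ (1 / r) * (A * ENNReal.ofReal ε) := mul_le_mul_right hent _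
    _ = ((n : ℝ≥0∞) ^ (1 / r) * ENNReal.ofReal ε) * A := by ring
    _ ≤ (ENNReal.ofReal c * (2 : ℝ≥0∞) ^ (((j : ℝ) * d) * (1 / r))) * A := mul_le_mul_left hs2 _
    _ = _ := by
      rw [mul_assoc, hA, ← ENNReal.rpow_add _ _ (by simp) (by simp)]
      congr 2
      ring
end
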